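/- Assume the sieve setup, that sup_d |λ_d| ≤ (log X)^{k/2}, and additionally that the prime p0 satisfies the level-of-distribution bound: for all x ≤ 3(log X)^{1/3}·X, ∑_{q < x^{2/5}, gcd(q, p0) = 1} sup_{(a,q)=1, x' ≤ x} |π(x'; q, a) − π(x')/φ(q)| ≤ x·exp(−c0·√(log x)) for an absolute constant c0 > 0. Then there exist absolute constants c1, c, C > 0 such that ∑_{X < n ≤ 2X, n ≡ v0 (mod W)} #{1 ≤ i ≤ k : L_i(n) ∈ 𝒮} · w_n ≥ c1 · (X·k / (φ(W)·(log X)^{1/2})) · ∑_{d,e} λ_d λ_e ∏_{p | de} (ν(p) − 1)/(p − 1) − C·X·exp(−c·√(log X)). -/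

import Mathlib

/-- `⟨P3⟩`: positive integers all of whose prime factors are `≡ 3 (mod 4)` (contains 1). -/
def InP3 (n : ℕ) : Prop := ∀ p : ℕ, p.Prime → p ∣ n → p % 4 = 3

/-- `m : ℤ` is a member of `𝒮`, the set of positive integers expressible
as a sum of two squares. -/
def IsSumTwoSquaresZ (m : ℤ) : Prop := 0 < m ∧ ∃ u v : ℤ, m = u ^ 2 + v ^ 2

/-- `piR x` is the number of primes `p ≤ x`. -/
noncomputable def piR (x : ℝ) : ℕ := {p : ℕ | p.Prime ∧ (p : ℝ) ≤ x}.ncard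

/-- `piAP x q a` is the number of primes `p ≤ x` with `p ≡ a (mod q)`. -/
noncomputable def piAP (x : ℝ) (q a : ℕ) : ℕ :=
  {p : ℕ | p.Prime ∧ (p : ℝ) ≤ x ∧ p % q = a % q}.ncard

/-- `Eerr x q = sup_{(a,q)=1, x' ≤ x} |π(x';q,a) − π(x')/φ(q)|`. -/
noncomputable def Eerr (x : ℝ) (q : ℕ) : ℝ :=
  sSup {r : ℝ | ∃ a : ℕ, ∃ x' : ℝ, Nat.Coprime a q ∧ x' ≤ x ∧
    r = |(piAP x' q a : ℝ) - (piR x' : ℝ) / (Nat.totient q : ℝ)|}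

lemma chA_logfac (N M : ℕ) (h : N ≤ M) : Real.log (N.factorial) =
    ∑ n ∈ Finset.Ioc 0 M, ArithmeticFunction.vonMangoldt n * ((N / n : ℕ) : ℝ) := by
  have h1 : Real.log (N.factorial) = ∑ n ∈ Finset.Ioc 0 N, Real.log n := by
    clear h
    induction N with
    | zero => simp
    | succ N ih =>
      rw [Nat.factorial_succ, Nat.cast_mul, Real.log_mul (by positivity) (by positivity), ih,
        Finset.sum_Ioc_succ_top (by omega)]
      ring
  have h2 := ArithmeticFunction.sum_Ioc_mul_zeta_eq_sum ArithmeticFunction.vonMangoldt N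
  rw [ArithmeticFunction.vonMangoldt_mul_zeta] at h2
  simp only [ArithmeticFunction.log_apply] at h2
  rw [h1, h2]
  apply Finset.sum_subset
  · intro x; simp; omega
  · intro x hx hx'
    simp only [Finset.mem_Ioc] at hx hx'
    rw [Nat.div_eq_of_lt (by omega)]; simp

/-- Chebyshev's combination. -/
noncomputable def chS (N : ℕ) : ℝ := Real.log (N.factorial) - Real.log ((N/2).factorial)
  - Real.log ((N/3).factorial) - Real.log ((N/5).factorial) + Real.log ((N/30).factorial)

lemma chA_S_eq (N : ℕ) : chS N = ∑ n ∈ Finset.Ioc 0 N, ArithmeticFunction.vonMangoldt n *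
   (((N/n : ℕ) : ℝ) - ((N/n/2 : ℕ) : ℝ) - ((N/n/3 : ℕ) : ℝ) - ((N/n/5 : ℕ) : ℝ)
     + ((N/n/30 : ℕ) : ℝ)) := by
  unfold chS
  rw [chA_logfac N N le_rfl, chA_logfac (N/2) N (Nat.div_le_self _ _),
    chA_logfac (N/3) N (Nat.div_le_self _ _),
    chA_logfac (N/5) N (Nat.div_le_self _ _), chA_logfac (N/30) N (Nat.div_le_self _ _)]
  rw [← Finset.sum_sub_distrib, ← Finset.sum_sub_distrib, ← Finset.sum_sub_distrib,
    ← Finset.sum_add_distrib]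
  apply Finset.sum_congr rfl
  intro n _
  rw [Nat.div_right_comm N n, Nat.div_right_comm N n, Nat.div_right_comm N n,
    Nat.div_right_comm N n]
  ring

lemma chA_S_le (N : ℕ) : chS N ≤ Chebyshev.psi N := by
  rw [chA_S_eq]
  unfold Chebyshev.psi
  rw [Nat.floor_natCast]
  apply Finset.sum_le_sum
  intro n _
  have h0 := ArithmeticFunction.vonMangoldt_nonneg (n := n)
  generalize N / n = m
  have h1 : m + m/30 ≤ 1 + m/2 + m/3 + m/5 := by omega
  have h2 : (m:ℝ) + ((m/30:ℕ):ℝ) ≤ 1 + ((m/2:ℕ):ℝ) + ((m/3:ℕ):ℝ) + ((m/5:ℕ):ℝ) := by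
    exact_mod_cast h1
  nlinarith

lemma chA_S_ge (N : ℕ) : Chebyshev.psi N - Chebyshev.psi (N/6 : ℕ) ≤ chS N := by
  rw [chA_S_eq]
  unfold Chebyshev.psi
  rw [Nat.floor_natCast, Nat.floor_natCast]
  have hs : Finset.Ioc 0 (N/6) ⊆ Finset.Ioc 0 N := by
    intro x; simp; omega
  rw [← Finset.sum_sdiff hs, add_sub_cancel_right]
  rw [← Finset.sum_sdiff hs]
  have h1 : ∀ m : ℕ, m + m/30 ≥ m/2 + m/3 + m/5 := by intro m; omega
  have h1' : ∀ m : ℕ, (m:ℝ) + ((m/30:ℕ):ℝ) ≥ ((m/2:ℕ):ℝ) + ((m/3:ℕ):ℝ) + ((m/5:ℕ):ℝ) := by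
    intro m; exact_mod_cast h1 m
  have h2 : ∑ n ∈ Finset.Ioc 0 (N/6), ArithmeticFunction.vonMangoldt n *
   (((N/n : ℕ) : ℝ) - ((N/n/2 : ℕ) : ℝ) - ((N/n/3 : ℕ) : ℝ) - ((N/n/5 : ℕ) : ℝ)
     + ((N/n/30 : ℕ) : ℝ)) ≥ 0 := by
    apply Finset.sum_nonneg
    intro n _
    apply mul_nonneg ArithmeticFunction.vonMangoldt_nonneg
    linarith [h1' (N/n)]
  refine le_trans ?_ (le_add_of_nonneg_right h2)
  apply Finset.sum_le_sum
  intro n hn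
  simp only [Finset.mem_sdiff, Finset.mem_Ioc] at hn
  have h0 := ArithmeticFunction.vonMangoldt_nonneg (n := n)
  have h5 : 1 ≤ N / n := (Nat.one_le_div_iff (by omega)).2 (by omega)
  have h6 : N / n < 6 := by
    rw [Nat.div_lt_iff_lt_mul (by omega)]; omega
  generalize N / n = m at *
  have h3 : m + m/30 = 1 + m/2 + m/3 + m/5 := by omega
  have h4 : (m:ℝ) + ((m/30:ℕ):ℝ) = 1 + ((m/2:ℕ):ℝ) + ((m/3:ℕ):ℝ) + ((m/5:ℕ):ℝ) := by
    exact_mod_cast h3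
  nlinarith

lemma chA_fac_upper (n : ℕ) (hn : 1 ≤ n) :
    Real.log n.factorial ≤ n * Real.log n - n + Real.log n + 1 := by
  induction n, hn using Nat.le_induction with
  | base => simp
  | succ n hn ih =>
    have hn' : (1:ℝ) ≤ n := by exact_mod_cast hn
    rw [Nat.factorial_succ, Nat.cast_mul, Real.log_mul (by positivity) (by positivity)]
    have h1 := Real.log_le_sub_one_of_pos (show (0:ℝ) < n / (n+1) by positivity)
    rw [Real.log_div (by positivity) (by positivity)] at h1
    have h2 : ((n:ℝ)+1) * (Real.log n - Real.log (n+1)) ≤ (n+1) * ((n:ℝ)/(n+1) - 1) :=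
      mul_le_mul_of_nonneg_left h1 (by positivity)
    have h3 : ((n:ℝ)+1) * ((n:ℝ)/(n+1) - 1) = -1 := by field_simp; ring
    push_cast
    nlinarith

/-- crude Stirling -/
lemma chA_stir (n : ℕ) (x : ℝ) (h1 : (n:ℝ) ≤ x) (h2 : x < n + 1) :
   |Real.log n.factorial - (x * Real.log x - x)| ≤ 2 * Real.log (x+1) + 2 := by
  rcases Nat.eq_zero_or_pos n with rfl | hn
  · simp only [Nat.cast_zero, zero_add] at h1 h2
    have hl : 0 ≤ Real.log (x+1) := Real.log_nonneg (by linarith)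
    rcases h1.eq_or_lt with rfl | hx
    · simp
    · have h3 := Real.log_le_sub_one_of_pos hx
      have h4 := Real.one_sub_inv_le_log_of_pos hx
      have h5 : x * (1 - x⁻¹) ≤ x * Real.log x := mul_le_mul_of_nonneg_left h4 hx.le
      have h6 : x * (1 - x⁻¹) = x - 1 := by field_simp
      have h7 : Real.log x ≤ 0 := by linarith
      simp only [Nat.factorial_zero, Nat.cast_one, Real.log_one]
      rw [abs_le]; constructor <;> nlinarith
  · have hn' : (1:ℝ) ≤ n := by exact_mod_cast hn
    have hx : 0 < x := by linarith
    have a1 := chA_fac_upper n hn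
    have a2 := Stirling.le_log_factorial_stirling (n := n) (by omega)
    have a3 : 0 ≤ Real.log (2 * Real.pi) := Real.log_nonneg (by linarith [Real.pi_gt_three])
    have a4 : 0 ≤ Real.log n := Real.log_nonneg hn'
    have a5 : Real.log n ≤ Real.log x := Real.log_le_log (by positivity) h1
    have a6 : Real.log x ≤ Real.log (x+1) := Real.log_le_log (by positivity) (by linarith)
    have b1 := Real.log_le_sub_one_of_pos (show (0:ℝ) < n / x by positivity)
    have b2 := Real.log_le_sub_one_of_pos (show (0:ℝ) < x / n by positivity)
    rw [Real.log_div (by positivity) (by positivity)] at b1 b2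
    have c1 : x * (Real.log n - Real.log x) ≤ x * (n / x - 1) :=
      mul_le_mul_of_nonneg_left b1 (by positivity)
    have c2 : n * (Real.log x - Real.log n) ≤ n * (x / n - 1) :=
      mul_le_mul_of_nonneg_left b2 (by positivity)
    have c3 : x * (n / x - 1) = n - x := by field_simp
    have c4 : n * (x / n - 1) = x - n := by field_simp
    have d1 : 0 ≤ (x - n) * Real.log n := mul_nonneg (by linarith) a4
    have d2 : (x - n) * Real.log x ≤ 1 * Real.log x :=
      mul_le_mul_of_nonneg_right (by linarith) (by linarith)
    rw [abs_le]; constructor <;> nlinarith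

/-- Chebyshev's constant. -/
noncomputable def chC : ℝ := Real.log 2 / 2 + Real.log 3 / 3 + Real.log 5 / 5 - Real.log 30 / 30

lemma chC_pos : 0 < chC := by
  unfold chC
  have : Real.log 30 = Real.log 2 + Real.log 3 + Real.log 5 := by
    rw [← Real.log_mul (by norm_num) (by norm_num), ← Real.log_mul (by norm_num) (by norm_num)]
    norm_num
  rw [this]
  have h2 : 0 < Real.log 2 := Real.log_pos (by norm_num)
  have h3 : 0 < Real.log 3 := Real.log_pos (by norm_num)
  have h5 : 0 < Real.log 5 := Real.log_pos (by norm_num)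
  linarith

lemma chA_S_asymp (N : ℕ) (hN : 1 ≤ N) : |chS N - chC * N| ≤ 10 * Real.log (N+1) + 10 := by
  have hN' : (1:ℝ) ≤ N := by exact_mod_cast hN
  have key : ∀ j : ℕ, 1 ≤ j → |Real.log (N/j).factorial - ((N/j : ℝ) * Real.log (N/j : ℝ) - (N/j:ℝ))|
      ≤ 2 * Real.log (N+1) + 2 := by
    intro j hj
    have hj' : (1:ℝ) ≤ j := by exact_mod_cast hj
    refine (chA_stir (N/j) (N/j:ℝ) Nat.cast_div_le ?_).trans ?_
    · rw [div_lt_iff₀ (by positivity)]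
      have := Nat.lt_mul_div_succ N (show 0 < j by omega)
      have h : (N:ℝ) < j * ((N/j:ℕ) + 1) := by exact_mod_cast this
      linarith
    · have : (N/j:ℝ) ≤ N := div_le_self (by positivity) hj'
      have := Real.log_le_log (by positivity) (show (N/j:ℝ) + 1 ≤ N + 1 by linarith)
      linarith
  have k1 := key 1 le_rfl
  have k2 := key 2 (by norm_num)
  have k3 := key 3 (by norm_num)
  have k5 := key 5 (by norm_num)
  have k30 := key 30 (by norm_num)
  have hlog : ∀ j : ℝ, 0 < j → Real.log (N / j) = Real.log N - Real.log j := by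
    intro j hj
    rw [Real.log_div (by positivity) (by positivity)]
  push_cast at *
  rw [Nat.div_one, div_one] at k1
  rw [hlog 2 (by norm_num)] at k2
  rw [hlog 3 (by norm_num)] at k3
  rw [hlog 5 (by norm_num)] at k5
  rw [hlog 30 (by norm_num)] at k30
  unfold chS chC
  rw [abs_le] at *
  constructor <;> linarith

lemma chA_log_small (ε : ℝ) (hε : 0 < ε) : ∃ K : ℝ, 0 ≤ K ∧ ∀ x : ℝ, 0 ≤ x →
    Real.log (x+1) ≤ ε * x + K := by
  refine ⟨1/ε + ε, by positivity, ?_⟩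
  intro x hx
  have h1 := Real.log_le_sub_one_of_pos (show 0 < ε * (x+1) by positivity)
  rw [Real.log_mul (by positivity) (by positivity)] at h1
  have h2 := Real.one_sub_inv_le_log_of_pos hε
  have : ε⁻¹ = 1 / ε := by simp
  linarith

lemma chA_psi_lower (ε : ℝ) (hε : 0 < ε) : ∃ K : ℝ, 0 ≤ K ∧ ∀ N : ℕ,
    (chC - ε) * N - K ≤ Chebyshev.psi N := by
  obtain ⟨K, hK, h⟩ := chA_log_small (ε/10) (by positivity)
  refine ⟨10 * K + 10, by positivity, ?_⟩
  intro N
  rcases Nat.eq_zero_or_pos N with rfl | hN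
  · simp; linarith
  have h1 := chA_S_asymp N hN
  have h2 := chA_S_le N
  have h3 := h N (by positivity)
  rw [abs_le] at h1
  linarith

lemma chA_psi_upper_aux (ε : ℝ) (hε : 0 < ε) : ∃ K : ℝ, 0 ≤ K ∧ ∀ N : ℕ, 1 ≤ N →
    Chebyshev.psi N ≤ 6/5 * (chC + ε) * N + K * (Real.log N + 1) := by
  obtain ⟨K, hK, h⟩ := chA_log_small (ε/10) (by positivity)
  refine ⟨10 * K + 10, by positivity, ?_⟩
  intro N
  induction N using Nat.strong_induction_on with
  | _ N ih =>
  intro hN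
  have hN' : (1:ℝ) ≤ N := by exact_mod_cast hN
  have h1 := chA_S_asymp N hN
  have h2 := chA_S_ge N
  have h3 := h N (by positivity)
  rw [abs_le] at h1
  have hc := chC_pos
  have hl : 0 ≤ Real.log N := Real.log_nonneg hN'
  by_cases h6 : N < 6
  · have : N / 6 = 0 := by omega
    rw [this] at h2
    simp only [Nat.cast_zero, Chebyshev.psi_zero] at h2
    have e1 : 0 ≤ (10 * K + 10) * Real.log N := by positivity
    have e2 : 0 ≤ (chC + ε) * N := by positivity
    linarith
  · have h4 := ih (N/6) (by omega) (by omega)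
    have h5 : ((N/6:ℕ):ℝ) ≤ N/6 := Nat.cast_div_le
    have h7 : Real.log (N/6:ℕ) ≤ Real.log (N/6) := by
      apply Real.log_le_log _ h5
      have : 1 ≤ N/6 := by omega
      exact_mod_cast this
    rw [Real.log_div (by positivity) (by positivity)] at h7
    have h8 : 1 ≤ Real.log 6 := by
      rw [Real.le_log_iff_exp_le (by norm_num)]
      linarith [Real.exp_one_lt_d9]
    have e1 : (10 * K + 10) * Real.log (N/6:ℕ) ≤ (10*K+10) * (Real.log N - 1) :=
      mul_le_mul_of_nonneg_left (by linarith) (by positivity)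
    have e2 : (chC + ε) * ((N/6:ℕ):ℝ) ≤ (chC + ε) * (N/6) :=
      mul_le_mul_of_nonneg_left h5 (by positivity)
    linarith

lemma chA_psi_upper (ε : ℝ) (hε : 0 < ε) : ∃ K : ℝ, 0 ≤ K ∧ ∀ x : ℝ, 0 ≤ x →
    Chebyshev.psi x ≤ (6/5 * chC + ε) * x + K := by
  obtain ⟨K, hK, h⟩ := chA_psi_upper_aux (ε/6) (by positivity)
  obtain ⟨K2, hK2, h2⟩ := chA_log_small (ε/(2*(K+1))) (by positivity)
  have hc := chC_pos
  refine ⟨K * K2 + K, by positivity, ?_⟩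
  intro x hx
  rw [Chebyshev.psi_eq_psi_coe_floor]
  have hf : (⌊x⌋₊ : ℝ) ≤ x := Nat.floor_le hx
  rcases Nat.eq_zero_or_pos ⌊x⌋₊ with h0 | h0
  · rw [h0]; simp only [Nat.cast_zero, Chebyshev.psi_zero]; positivity
  have h3 := h _ h0
  have h0' : (1:ℝ) ≤ (⌊x⌋₊ : ℝ) := by exact_mod_cast h0
  have h4 := h2 _ hx
  have h5 : Real.log ⌊x⌋₊ ≤ Real.log (x+1) := Real.log_le_log (by positivity) (by linarith)
  have e1 : K * Real.log ⌊x⌋₊ ≤ K * (ε/(2*(K+1)) * x + K2) :=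
    mul_le_mul_of_nonneg_left (by linarith) hK
  have e2 : K * (ε/(2*(K+1)) * x) ≤ ε/2 * x := by
    have : K * (ε/(2*(K+1)) * x) = (K/(K+1)) * (ε/2 * x) := by field_simp
    rw [this]
    apply mul_le_of_le_one_left (by positivity)
    rw [div_le_one (by positivity)]; linarith
  have e3 : (chC + ε/6) * (⌊x⌋₊:ℝ) ≤ (chC + ε/6) * x := mul_le_mul_of_nonneg_left hf (by positivity)
  have e4 : 0 ≤ ε * x := by positivity
  linarith

lemma chA_theta_lower (ε : ℝ) (hε : 0 < ε) : ∃ K : ℝ, 0 ≤ K ∧ ∀ x : ℝ, 0 ≤ x →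
    (chC - ε) * x - K ≤ Chebyshev.theta x := by
  obtain ⟨K, hK, h⟩ := chA_psi_lower (ε/2) (by positivity)
  obtain ⟨C, hC⟩ := Chebyshev.psi_sub_theta_le_mul_sqrt
  refine ⟨K + |chC| + ε + C^2/(2*ε), by positivity, ?_⟩
  intro x hx
  have h1 := h ⌊x⌋₊
  rw [← Chebyshev.psi_eq_psi_coe_floor] at h1
  have h2 := hC x
  have h3 : x < ⌊x⌋₊ + 1 := Nat.lt_floor_add_one x
  have hf : (⌊x⌋₊ : ℝ) ≤ x := Nat.floor_le hx
  have h4 : C * x.sqrt ≤ ε/2 * x + C^2/(2*ε) := by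
    have hs : x.sqrt ^2 = x := Real.sq_sqrt hx
    have : ε/2 * x + C^2/(2*ε) - C * x.sqrt = (ε * x.sqrt - C)^2/(2*ε) := by
      have : (ε * x.sqrt - C)^2 = ε^2 * x - 2 * ε * C * x.sqrt + C^2 := by
        rw [sub_sq, mul_pow, hs]; ring
      rw [this]; field_simp; ring
    have : 0 ≤ (ε * x.sqrt - C)^2/(2*ε) := by positivity
    linarith
  have h5 : chC ≤ |chC| := le_abs_self _
  have hc := chC_pos
  have h6 : (chC - ε/2) * x - |chC| - ε ≤ (chC - ε/2) * ⌊x⌋₊ := by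
    nlinarith
  linarith

lemma chA_interval : ∃ Z0 : ℝ, 1 ≤ Z0 ∧ ∀ Y Z : ℝ, Z0 ≤ Z → 0 ≤ Y → Y ≤ 2 * Z →
    chC / 4 * Z ≤ Chebyshev.theta (Y+Z) - Chebyshev.theta Y := by
  have hc := chC_pos
  obtain ⟨K1, hK1, h1⟩ := chA_theta_lower (chC/40) (by positivity)
  obtain ⟨K2, hK2, h2⟩ := chA_psi_upper (chC/40) (by positivity)
  refine ⟨max 1 ((K1+K2) * 8 / chC), le_max_left _ _, ?_⟩
  intro Y Z hZ hY hYZ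
  have hZ1 : 1 ≤ Z := le_trans (le_max_left _ _) hZ
  have hZ2 : (K1+K2) * 8 / chC ≤ Z := le_trans (le_max_right _ _) hZ
  rw [div_le_iff₀ hc] at hZ2
  have a := h1 (Y+Z) (by linarith)
  have b := h2 Y hY
  have c := Chebyshev.theta_le_psi Y
  have d : chC * Y ≤ chC * (2*Z) := mul_le_mul_of_nonneg_left hYZ hc.le
  have e : 0 ≤ chC * Z := by positivity
  nlinarith

/-- counting primes in the interval -/
lemma chA_count : ∃ c Z0 : ℝ, 0 < c ∧ 1 ≤ Z0 ∧ ∀ Y Z : ℝ, Z0 ≤ Z → 0 ≤ Y → Y ≤ 2 * Z →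
    c * Z / Real.log (3 * Z) ≤
     (((Finset.Ioc ⌊Y⌋₊ ⌊Y+Z⌋₊).filter Nat.Prime).card : ℝ) := by
  have hc := chC_pos
  obtain ⟨Z0, hZ0, h⟩ := chA_interval
  refine ⟨chC/4, Z0, by positivity, hZ0, ?_⟩
  intro Y Z hZ hY hYZ
  have h1 := h Y Z hZ hY hYZ
  have hl : 0 < Real.log (3*Z) := Real.log_pos (by linarith)
  rw [div_le_iff₀ hl]
  refine h1.trans ?_
  unfold Chebyshev.theta
  have hfl : ⌊Y⌋₊ ≤ ⌊Y+Z⌋₊ := Nat.floor_le_floor (by linarith)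
  have hs : (Finset.Ioc 0 ⌊Y⌋₊).filter Nat.Prime ⊆ (Finset.Ioc 0 ⌊Y+Z⌋₊).filter Nat.Prime := by
    intro p; simp only [Finset.mem_filter, Finset.mem_Ioc]; exact fun h => ⟨⟨h.1.1, h.1.2.trans hfl⟩, h.2⟩
  rw [← Finset.sum_sdiff hs, add_sub_cancel_right]
  have he : (Finset.Ioc 0 ⌊Y+Z⌋₊).filter Nat.Prime \ (Finset.Ioc 0 ⌊Y⌋₊).filter Nat.Prime
     = (Finset.Ioc ⌊Y⌋₊ ⌊Y+Z⌋₊).filter Nat.Prime := by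
    ext p; simp only [Finset.mem_sdiff, Finset.mem_filter, Finset.mem_Ioc]
    constructor
    · rintro ⟨⟨h1,h2⟩,h3⟩; refine ⟨⟨?_, by omega⟩, h2⟩
      by_contra h; exact h3 ⟨⟨h1.1, by omega⟩, h2⟩
    · rintro ⟨⟨h1,h2⟩,h3⟩; exact ⟨⟨⟨by omega, h2⟩, h3⟩, fun h => by omega⟩
  rw [he, ← nsmul_eq_mul]
  apply Finset.sum_le_card_nsmul
  intro p hp
  simp only [Finset.mem_filter, Finset.mem_Ioc] at hp
  apply Real.log_le_log (by exact_mod_cast hp.2.pos)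
  have : (p:ℝ) ≤ ⌊Y+Z⌋₊ := by exact_mod_cast hp.1.2
  have h3 : (⌊Y+Z⌋₊:ℝ) ≤ Y + Z := Nat.floor_le (by linarith)
  linarith

/-- all prime factors are `1 mod 4` -/
def InP1 (n : ℕ) : Prop := ∀ p : ℕ, p.Prime → p ∣ n → p % 4 = 1

/-- chi_4 as an arithmetic function -/
noncomputable def chiA : ArithmeticFunction ℤ := ⟨fun n => ZMod.χ₄ (n : ZMod 4), by simp⟩

lemma chiA_apply (n : ℕ) : chiA n = ZMod.χ₄ (n : ZMod 4) := rfl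

lemma chiA_mult : chiA.IsMultiplicative := by
  refine ⟨by simp [chiA_apply], ?_⟩
  intro m n _
  rw [chiA_apply, chiA_apply, chiA_apply, Nat.cast_mul, map_mul]

/-- the (quarter) representation function -/
noncomputable def rA (n : ℕ) : ℤ := ∑ d ∈ n.divisors, chiA d

lemma rA_mul (a b : ℕ) (h : Nat.Coprime a b) : rA (a * b) = rA a * rA b := by
  have h1 : (chiA * (ArithmeticFunction.zeta : ArithmeticFunction ℤ)).IsMultiplicative :=
    chiA_mult.mul (ArithmeticFunction.isMultiplicative_zeta.natCast)
  have h2 := h1.2 h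
  rw [ArithmeticFunction.coe_mul_zeta_apply, ArithmeticFunction.coe_mul_zeta_apply,
    ArithmeticFunction.coe_mul_zeta_apply] at h2
  exact h2

lemma rA_claim (n : ℕ) (hn : n ≠ 0) : rA n = 0 ∨ (0 ≤ rA n ∧ ∃ m s j : ℕ, InP1 m ∧ (j = 1 ∨ j = 2) ∧
    n = m * (j * s ^ 2) ∧ rA n ≤ (m.divisors.card : ℤ)) := by
  induction n using Nat.recOnPosPrimePosCoprime with
  | zero => simp at hn
  | one =>
    right
    refine ⟨by simp [rA, chiA_apply], 1, 1, 1, ?_, by simp, by simp, by simp [rA, chiA_apply]⟩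
    intro p hp h; exact absurd (Nat.dvd_one.1 h) hp.ne_one
  | prime_pow p k hp hk =>
    have hr : rA (p^k) = ∑ i ∈ Finset.range (k+1), (ZMod.χ₄ (p : ZMod 4))^i := by
      unfold rA
      rw [Nat.sum_divisors_prime_pow hp]
      apply Finset.sum_congr rfl
      intro i _
      rw [chiA_apply, Nat.cast_pow, map_pow]
    have h4 : p = 2 ∨ p % 4 = 1 ∨ p % 4 = 3 := by
      rcases hp.eq_two_or_odd with h | h
      · left; exact h
      · right; omega
    rcases h4 with rfl | h4 | h4
    · right
      have h2 : ZMod.χ₄ ((2:ℕ) : ZMod 4) = 0 := by decide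
      rw [h2] at hr
      have hr1 : rA (2^k) = 1 := by
        rw [hr, Finset.sum_range_succ']
        simp
      rw [hr1]
      refine ⟨by simp, 1, 2^(k/2), if k % 2 = 0 then 1 else 2, ?_, by split_ifs <;> simp, ?_, by simp⟩
      · intro p hp h; exact absurd (Nat.dvd_one.1 h) hp.ne_one
      · split_ifs with h
        · rw [one_mul, one_mul, ← pow_mul]; congr 1; omega
        · rw [one_mul, ← pow_mul, ← pow_succ']; congr 1; omega
    · right
      rw [ZMod.χ₄_nat_one_mod_four h4] at hr
      simp only [one_pow, Finset.sum_const, Finset.card_range, nsmul_eq_mul, mul_one] at hr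
      rw [hr]
      refine ⟨by positivity, p^k, 1, 1, ?_, by simp, by simp, ?_⟩
      · intro q hq h
        rw [(Nat.prime_dvd_prime_iff_eq hq hp).1 (hq.dvd_of_dvd_pow h)]; exact h4
      · rw [Nat.divisors_prime_pow hp]; simp
    · rw [ZMod.χ₄_nat_three_mod_four h4] at hr
      rcases Nat.even_or_odd k with ⟨l, hl⟩ | hl
      · right
        have hr1 : rA (p^k) = 1 := by
          rw [hr, neg_one_geom_sum, if_neg]
          simp [hl]
        rw [hr1]
        refine ⟨by simp, 1, p^l, 1, ?_, by simp, ?_, by simp⟩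
        · intro p hp h; exact absurd (Nat.dvd_one.1 h) hp.ne_one
        · rw [one_mul, one_mul, ← pow_mul]; congr 1; omega
      · left
        rw [hr, neg_one_geom_sum, if_pos]
        exact hl.add_one
  | coprime a b ha hb hab iha ihb =>
    rw [rA_mul a b hab]
    rcases iha (by omega) with h1 | ⟨h1, m, s, j, hm, hj, hms, hle⟩
    · left; rw [h1, zero_mul]
    rcases ihb (by omega) with h2 | ⟨h2, m', s', j', hm', hj', hms', hle'⟩
    · left; rw [h2, mul_zero]
    right
    have hcop : Nat.Coprime m m' :=
      Nat.Coprime.coprime_dvd_left (Dvd.intro _ hms.symm)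
        (Nat.Coprime.coprime_dvd_right (Dvd.intro _ hms'.symm) hab)
    have hd : ((m*m').divisors.card : ℤ) = m.divisors.card * m'.divisors.card := by
      rw [hcop.card_divisors_mul]; simp
    have hP : InP1 (m * m') := by
      intro p hp h
      rcases (hp.dvd_mul).1 h with h | h
      · exact hm p hp h
      · exact hm' p hp h
    refine ⟨mul_nonneg h1 h2, ?_⟩
    have hle2 : rA a * rA b ≤ (((m * m').divisors.card : ℕ) : ℤ) := by
      rw [hd]; exact mul_le_mul hle hle' h2 (by positivity)
    rcases hj with rfl | rfl <;> rcases hj' with rfl | rfl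
    · exact ⟨m*m', s*s', 1, hP, by simp, by rw [hms, hms']; ring, hle2⟩
    · exact ⟨m*m', s*s', 2, hP, by simp, by rw [hms, hms']; ring, hle2⟩
    · exact ⟨m*m', s*s', 2, hP, by simp, by rw [hms, hms']; ring, hle2⟩
    · exact ⟨m*m', 2*s*s', 1, hP, by simp, by rw [hms, hms']; ring, hle2⟩

open Classical in
/-- reciprocal sum over `⟨P1⟩` -/
noncomputable def SP1 (N : ℕ) : ℝ := ∑ m ∈ (Finset.Ioc 0 N).filter InP1, (1:ℝ) / m

open Classical in
lemma SP1_upper (N : ℕ) : ∑ n ∈ Finset.Ioc 0 N, (rA n : ℝ) / n ≤ 3 * SP1 N ^ 2 := by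
  set P := (Finset.Ioc 0 N).filter InP1 with hP
  set I := P ×ˢ P ×ˢ (Finset.Ioc 0 N) ×ˢ ({1,2} : Finset ℕ) with hI
  set val : ℕ × ℕ × ℕ × ℕ → ℕ := fun x => x.1 * x.2.1 * (x.2.2.2 * x.2.2.1 ^ 2) with hval
  have h1 : ∀ n ∈ Finset.Ioc 0 N, (rA n : ℝ) / n ≤ ∑ x ∈ I.filter (fun x => val x = n), (1:ℝ) / val x := by
    intro n hn
    rw [Finset.mem_Ioc] at hn
    rw [Finset.sum_congr rfl (g := fun _ => (1:ℝ)/n)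
      (by intro x hx; rw [(Finset.mem_filter.1 hx).2])]
    rw [Finset.sum_const, nsmul_eq_mul, mul_one_div]
    apply div_le_div_of_nonneg_right _ (by positivity)
    rcases rA_claim n (by omega) with h | ⟨_, m, s, j, hm, hj, hms, hle⟩
    · rw [h]; simp
    · have : m.divisors.card ≤ (I.filter (fun x => val x = n)).card := by
        have hs0 : s ≠ 0 := by rintro rfl; simp at hms; omega
        have hm0 : m ≠ 0 := by rintro rfl; simp at hms; omega
        have hj0 : 0 < j := by omega
        have hmN : m ≤ N := le_trans (Nat.le_of_dvd hn.1 (Dvd.intro _ hms.symm)) hn.2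
        have hsN : s ≤ N := by
          refine le_trans (Nat.le_of_dvd hn.1 ?_) hn.2
          rw [hms]; exact Dvd.intro_left (m * j * s) (by ring)
        apply Finset.card_le_card_of_injOn (fun d => (d, m/d, s, j))
        · intro d hd
          have hd' := Nat.dvd_of_mem_divisors (Finset.mem_coe.1 hd)
          have hd0 : 0 < d := Nat.pos_of_dvd_of_pos hd' (by omega)
          have hd2 : m / d ∣ m := Nat.div_dvd_of_dvd hd'
          have hd3 : 0 < m / d := Nat.pos_of_dvd_of_pos hd2 (by omega)
          simp only [Finset.coe_filter, Set.mem_ofPred_eq, hI, hP, Finset.mem_product,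
            Finset.mem_filter, Finset.mem_Ioc, hval]
          refine ⟨⟨⟨⟨hd0, (Nat.le_of_dvd (by omega) hd').trans hmN⟩,
              fun p hp h => hm p hp (h.trans hd')⟩,
            ⟨⟨hd3, (Nat.le_of_dvd (by omega) hd2).trans hmN⟩,
              fun p hp h => hm p hp (h.trans hd2)⟩, ⟨by omega, hsN⟩, ?_⟩, ?_⟩
          · rcases hj with rfl | rfl <;> simp
          · rw [Nat.mul_div_cancel' hd', hms]
        · intro d _ d' _ h
          simp only [Prod.mk.injEq] at h
          exact h.1
      have : ((m.divisors.card : ℤ) : ℝ) ≤ ((I.filter (fun x => val x = n)).card : ℝ) := by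
        exact_mod_cast this
      refine le_trans ?_ this
      exact_mod_cast hle
  refine (Finset.sum_le_sum h1).trans ?_
  have h2 : ∑ n ∈ Finset.Ioc 0 N, ∑ x ∈ I.filter (fun x => val x = n), (1:ℝ) / val x ≤
      ∑ x ∈ I, (1:ℝ) / val x := by
    simp_rw [Finset.sum_filter]
    rw [Finset.sum_comm]
    apply Finset.sum_le_sum
    intro x _
    rw [Finset.sum_ite_eq]
    split_ifs
    · exact le_rfl
    · positivity
  refine h2.trans ?_
  have h3 : ∑ x ∈ I, (1:ℝ) / val x = SP1 N * (SP1 N * ((∑ s ∈ Finset.Ioc 0 N, ((s:ℝ)^2)⁻¹) *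
      ∑ j ∈ ({1,2}:Finset ℕ), (1:ℝ)/j)) := by
    unfold SP1
    simp only [hI, Finset.sum_product, hval]
    rw [Finset.sum_mul]
    refine Finset.sum_congr rfl fun x _ => ?_
    rw [Finset.sum_mul, Finset.mul_sum]
    refine Finset.sum_congr rfl fun y _ => ?_
    rw [Finset.sum_mul_sum, Finset.mul_sum, Finset.mul_sum]
    refine Finset.sum_congr rfl fun z _ => ?_
    rw [Finset.mul_sum, Finset.mul_sum]
    refine Finset.sum_congr rfl fun t _ => ?_
    push_cast
    simp only [one_div, mul_inv]
    ring
  rw [h3]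
  have h4 : (∑ s ∈ Finset.Ioc 0 N, ((s:ℝ)^2)⁻¹) ≤ 2 := by
    have := sum_Ioo_inv_sq_le (α := ℝ) 0 (N+1)
    simp only [Nat.cast_zero, zero_add, div_one] at this
    refine le_trans (le_of_eq ?_) this
    apply Finset.sum_congr _ (fun _ _ => rfl)
    ext x; simp
  have h5 : ∑ j ∈ ({1,2}:Finset ℕ), (1:ℝ)/j = 3/2 := by
    rw [Finset.sum_pair (by norm_num)]; norm_num
  rw [h5]
  nlinarith [sq_nonneg (SP1 N)]

lemma SP1_alt (F : ℕ → ℝ) (hF : ∀ d, 1 ≤ d → F (d+2) ≤ F d) (M : ℕ) :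
    F 1 - F 3 ≤ ∑ d ∈ Finset.range (4 * (M+1)), (chiA d : ℝ) * F d := by
  have hv : ∀ d, chiA d = if d % 2 = 0 then 0 else if d % 4 = 1 then 1 else -1 := by
    intro d; rw [chiA_apply, ZMod.χ₄_nat_eq_if_mod_four]
  induction M with
  | zero =>
    simp [Finset.sum_range_succ, hv]
  | succ M ih =>
    have : 4 * (M+1+1) = 4 * (M+1) + 1 + 1 + 1 + 1 := by ring
    rw [this]
    rw [Finset.sum_range_succ, Finset.sum_range_succ, Finset.sum_range_succ, Finset.sum_range_succ]
    rw [hv (4*(M+1)), hv (4*(M+1)+1), hv (4*(M+1)+1+1), hv (4*(M+1)+1+1+1)]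
    rw [if_pos (by omega), if_neg (by omega), if_pos (by omega), if_pos (by omega), if_neg (by omega), if_neg (by omega)]
    have := hF (4*(M+1)+1) (by omega)
    simp only [Int.cast_zero, zero_mul, add_zero, Int.cast_one, one_mul, Int.cast_neg]
    have h2 : 4*(M+1)+1+2 = 4*(M+1)+1+1+1 := by ring
    rw [h2] at this
    linarith

/-- harmonic numbers in `ℝ` -/
noncomputable def Hn (N : ℕ) : ℝ := ∑ m ∈ Finset.Ioc 0 N, (1:ℝ) / m

lemma Hn_mono : Monotone Hn := by
  intro a b h
  unfold Hn
  apply Finset.sum_le_sum_of_subset_of_nonneg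
  · intro x; simp; omega
  · intros; positivity

lemma Hn_nonneg (N : ℕ) : 0 ≤ Hn N := by unfold Hn; positivity

lemma Hn_eq (N : ℕ) : Hn N = harmonic N := by
  rw [harmonic_eq_sum_Icc]
  unfold Hn
  push_cast
  apply Finset.sum_congr
  · ext x; simp; omega
  · intros; simp

/-- chi(n)/n -/
noncomputable def chiD : ArithmeticFunction ℝ := ⟨fun n => (chiA n : ℝ) / n, by simp⟩

/-- 1/n -/
noncomputable def invD : ArithmeticFunction ℝ := ⟨fun n => 1 / (n:ℝ), by simp⟩

lemma chiD_apply (n : ℕ) : chiD n = (chiA n : ℝ) / n := rfl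

lemma invD_apply (n : ℕ) : invD n = 1 / (n : ℝ) := rfl

lemma SP1_lower (N : ℕ) : 2/3 * Hn N ≤ ∑ n ∈ Finset.Ioc 0 N, (rA n : ℝ) / n := by
  have h := ArithmeticFunction.sum_Ioc_mul_eq_sum_sum chiD invD N
  simp only [ArithmeticFunction.mul_apply, chiD_apply, invD_apply] at h
  have h1 : ∑ n ∈ Finset.Ioc 0 N, (rA n : ℝ) / n = ∑ n ∈ Finset.Ioc 0 N,
      ∑ x ∈ n.divisorsAntidiagonal, (chiA x.1 : ℝ) / x.1 * (1 / (x.2:ℝ)) := by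
    apply Finset.sum_congr rfl
    intro n hn
    rw [Finset.mem_Ioc] at hn
    rw [rA, ← Nat.sum_divisorsAntidiagonal (fun d _ => chiA d)]
    push_cast
    rw [Finset.sum_div]
    apply Finset.sum_congr rfl
    intro x hx
    rw [Nat.mem_divisorsAntidiagonal] at hx
    rw [← hx.1, div_mul_div_comm, mul_one]
    push_cast; rfl
  rw [h1, h]
  set F : ℕ → ℝ := fun d => 1 / (d:ℝ) * Hn (N/d) with hFdef
  have h2 : ∑ n ∈ Finset.Ioc 0 N, (chiA n : ℝ) / n * ∑ m ∈ Finset.Ioc 0 (N/n), 1/(m:ℝ)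
     = ∑ d ∈ Finset.range (4 * (N+1)), (chiA d : ℝ) * F d := by
    rw [← Finset.sum_subset (s₁ := Finset.Ioc 0 N) (s₂ := Finset.range (4 * (N+1)))]
    · apply Finset.sum_congr rfl
      intro n _
      simp only [hFdef, Hn]; ring
    · intro x; simp; omega
    · intro x _ hx
      simp only [Finset.mem_Ioc, not_and, not_le] at hx
      rcases Nat.eq_zero_or_pos x with rfl | hx0
      · simp
      · simp [hFdef, Nat.div_eq_of_lt (hx hx0), Hn]
  rw [h2]
  refine le_trans ?_ (SP1_alt F ?_ N)
  · simp only [hFdef]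
    have : Hn (N/3) ≤ Hn N := Hn_mono (Nat.div_le_self _ _)
    simp only [Nat.cast_one, Nat.div_one, Nat.cast_ofNat]
    linarith
  · intro d hd
    simp only [hFdef]
    apply mul_le_mul
    · apply one_div_le_one_div_of_le (by positivity)
      push_cast; linarith
    · exact Hn_mono (Nat.div_le_div_left (by omega) (by omega))
    · exact Hn_nonneg _
    · positivity

lemma SP1_bound (N : ℕ) : 1/3 * Real.sqrt (Real.log (N+1)) ≤ SP1 N := by
  have h1 := SP1_upper N
  have h2 := SP1_lower N
  have h3 := log_add_one_le_harmonic N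
  rw [← Hn_eq] at h3
  push_cast at h3
  have h0 : 0 ≤ SP1 N := by unfold SP1; positivity
  have h4 : 0 ≤ Real.log (N+1) := Real.log_nonneg (by linarith [Nat.cast_nonneg (α := ℝ) N])
  have : (1/3 * Real.sqrt (Real.log (N+1)))^2 ≤ SP1 N ^ 2 := by
    rw [mul_pow, Real.sq_sqrt h4]; nlinarith
  exact le_trans (le_abs_self _) (abs_le_of_sq_le_sq this h0)

open Classical in
/-- coprime version -/
noncomputable def SP1F (N : ℕ) (F : Finset ℕ) : ℝ :=
  ∑ m ∈ (Finset.Ioc 0 N).filter (fun m => InP1 m ∧ ∀ p ∈ F, ¬ p ∣ m), (1:ℝ) / m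

open Classical in
lemma SP1F_bound (N : ℕ) (F : Finset ℕ) (hF : ∀ p ∈ F, p.Prime) :
    (∏ p ∈ F, (1 - (p:ℝ)⁻¹)) * SP1 N ≤ SP1F N F := by
  induction F using Finset.induction_on with
  | empty => simp [SP1F, SP1]
  | insert p F hp ih =>
    have hpp : p.Prime := hF p (by simp)
    have hp0 : (0:ℝ) < p := by exact_mod_cast hpp.pos
    rw [Finset.prod_insert hp, mul_assoc]
    have h1 := ih (fun q hq => hF q (by simp [hq]))
    have h2 : 0 ≤ 1 - (p:ℝ)⁻¹ := by
      have : (p:ℝ)⁻¹ ≤ 1 := inv_le_one_of_one_le₀ (by exact_mod_cast hpp.one_le)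
      linarith
    refine (mul_le_mul_of_nonneg_left h1 h2).trans ?_
    -- S(F) ≤ S(F ∪ p) + (1/p) S(F)
    have h3 : SP1F N F ≤ SP1F N (insert p F) + (p:ℝ)⁻¹ * SP1F N F := by
      have hsplit : SP1F N F = SP1F N (insert p F) +
        ∑ m ∈ (Finset.Ioc 0 N).filter (fun m => (InP1 m ∧ ∀ p ∈ F, ¬ p ∣ m) ∧ p ∣ m), (1:ℝ) / m := by
        unfold SP1F
        rw [← Finset.sum_filter_add_sum_filter_not _ (fun m => ¬ p ∣ m)]
        simp only [Finset.filter_filter, not_not]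
        congr 1
        apply Finset.sum_congr _ (fun _ _ => rfl)
        ext m; simp only [Finset.mem_filter, Finset.forall_mem_insert]; tauto
      have hle : ∑ m ∈ (Finset.Ioc 0 N).filter (fun m => (InP1 m ∧ ∀ p ∈ F, ¬ p ∣ m) ∧ p ∣ m), (1:ℝ) / m
         ≤ (p:ℝ)⁻¹ * SP1F N F := by
        unfold SP1F
        rw [Finset.mul_sum]
        have e1 : ∑ m ∈ (Finset.Ioc 0 N).filter (fun m => (InP1 m ∧ ∀ p ∈ F, ¬ p ∣ m) ∧ p ∣ m), (1:ℝ) / m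
          = ∑ m ∈ (Finset.Ioc 0 N).filter (fun m => (InP1 m ∧ ∀ p ∈ F, ¬ p ∣ m) ∧ p ∣ m),
            (p:ℝ)⁻¹ * (1 / ((m/p : ℕ):ℝ)) := by
          apply Finset.sum_congr rfl
          intro m hm
          obtain ⟨k, hk⟩ := (Finset.mem_filter.1 hm).2.2
          rw [hk, Nat.mul_div_cancel_left _ hpp.pos]
          push_cast
          rw [one_div, one_div, mul_inv]
        rw [e1]
        rw [← Finset.sum_image (s := (Finset.Ioc 0 N).filter (fun m => (InP1 m ∧ ∀ p ∈ F, ¬ p ∣ m) ∧ p ∣ m))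
          (g := fun m : ℕ => m / p) (f := fun m : ℕ => (p:ℝ)⁻¹ * (1 / (m:ℝ)))]
        · apply Finset.sum_le_sum_of_subset_of_nonneg
          · intro x hx
            rw [Finset.mem_image] at hx
            obtain ⟨m, hm, rfl⟩ := hx
            simp only [Finset.mem_filter, Finset.mem_Ioc] at hm ⊢
            have hd : m / p ∣ m := Nat.div_dvd_of_dvd hm.2.2
            refine ⟨⟨Nat.pos_of_dvd_of_pos hd hm.1.1, (Nat.div_le_self _ _).trans hm.1.2⟩,
              fun q hq h => hm.2.1.1 q hq (h.trans hd), fun q hq h => hm.2.1.2 q hq (h.trans hd)⟩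
          · intros; positivity
        · intro x hx y hy h
          have hx' := (Finset.mem_filter.1 (Finset.mem_coe.1 hx)).2.2
          have hy' := (Finset.mem_filter.1 (Finset.mem_coe.1 hy)).2.2
          have h' : x / p = y / p := h
          rw [← Nat.div_mul_cancel hx', ← Nat.div_mul_cancel hy', h']
      linarith
    linarith

lemma tot_real (n : ℕ) : (n.totient : ℝ) = n * ∏ p ∈ n.primeFactors, (1 - (p:ℝ)⁻¹) := by
  have h := Nat.totient_eq_mul_prod_factors n
  have h2 : ((n.totient : ℚ) : ℝ) = ((n * ∏ p ∈ n.primeFactors, (1 - (p:ℚ)⁻¹) : ℚ) : ℝ) := by rw [h]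
  push_cast at h2
  exact h2

lemma tot_mul_W (A W : ℕ) (hA : A ≠ 0) (hW : W ≠ 0) : ((A * W).totient : ℝ) =
    A * W.totient * ∏ p ∈ A.primeFactors.filter (fun p => ¬ p ∣ W), (1 - (p:ℝ)⁻¹) := by
  rw [tot_real, tot_real W]
  have : (A*W).primeFactors = W.primeFactors ∪ A.primeFactors.filter (fun p => ¬ p ∣ W) := by
    rw [Nat.primeFactors_mul hA hW]
    ext p; simp only [Finset.mem_union, Finset.mem_filter, Nat.mem_primeFactors]; tauto
  rw [this, Finset.prod_union]
  · push_cast; ring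
  · rw [Finset.disjoint_left]
    intro p hp hp'
    exact (Finset.mem_filter.1 hp').2 (Nat.dvd_of_mem_primeFactors hp)

open Classical in
/-- coprime version -/
noncomputable def SP1c (N A : ℕ) : ℝ :=
  ∑ m ∈ (Finset.Ioc 0 N).filter (fun m => InP1 m ∧ Nat.Coprime m A), (1:ℝ) / m

open Classical in
lemma SP1c_bound (N A W : ℕ) (hA : A ≠ 0) (hW : W ≠ 0) (hW3 : InP3 W) :
    ((A * W).totient : ℝ) * SP1 N ≤ A * W.totient * SP1c N A := by
  rw [tot_mul_W A W hA hW, mul_assoc]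
  apply mul_le_mul_of_nonneg_left _ (by positivity)
  refine (SP1F_bound N _ (fun p hp => Nat.prime_of_mem_primeFactors (Finset.mem_filter.1 hp).1)).trans ?_
  unfold SP1F SP1c
  apply Finset.sum_le_sum_of_subset_of_nonneg
  · intro m
    simp only [Finset.mem_filter, and_imp, Nat.mem_primeFactors]
    intro h1 h2 h3
    refine ⟨h1, h2, ?_⟩
    apply Nat.Coprime.symm
    apply Nat.Coprime.symm
    apply Nat.coprime_of_dvd
    intro q hq hqm hqA
    refine h3 q hq hqA hA ?_ hqm
    intro hqW
    have a1 := hW3 q hq hqW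
    have a2 := h2 q hq hqm
    omega
  · intros; positivity

/-- primes in `(Y1, Y2]` -/
noncomputable def pI (Y1 Y2 : ℝ) : Finset ℕ := (Finset.Ioc ⌊Y1⌋₊ ⌊Y2⌋₊).filter Nat.Prime

lemma piR_eq (x : ℝ) (hx : 0 ≤ x) : piR x = ((Finset.Ioc 0 ⌊x⌋₊).filter Nat.Prime).card := by
  unfold piR
  rw [← Set.ncard_coe_finset]
  congr 1
  ext p
  simp only [Set.mem_ofPred_eq, Finset.coe_filter, Finset.mem_Ioc]
  rw [Nat.le_floor_iff hx]
  constructor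
  · rintro ⟨h1, h2⟩; exact ⟨⟨h1.pos, h2⟩, h1⟩
  · rintro ⟨⟨_, h2⟩, h1⟩; exact ⟨h1, h2⟩

lemma piAP_eq (x : ℝ) (hx : 0 ≤ x) (q a : ℕ) : piAP x q a =
    ((Finset.Ioc 0 ⌊x⌋₊).filter (fun p => p.Prime ∧ p % q = a % q)).card := by
  unfold piAP
  rw [← Set.ncard_coe_finset]
  congr 1
  ext p
  simp only [Set.mem_ofPred_eq, Finset.coe_filter, Finset.mem_Ioc]
  rw [Nat.le_floor_iff hx]
  constructor
  · rintro ⟨h1, h2, h3⟩; exact ⟨⟨h1.pos, h2⟩, h1, h3⟩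
  · rintro ⟨⟨_, h2⟩, h1, h3⟩; exact ⟨h1, h2, h3⟩

lemma piR_neg (x : ℝ) (hx : x < 0) : piR x = 0 := by
  unfold piR
  convert Set.ncard_empty ℕ
  rw [Set.eq_empty_iff_forall_notMem]
  rintro p ⟨h1, h2⟩
  have : (0:ℝ) ≤ p := Nat.cast_nonneg p
  linarith

lemma piAP_neg (x : ℝ) (hx : x < 0) (q a : ℕ) : piAP x q a = 0 := by
  unfold piAP
  convert Set.ncard_empty ℕ
  rw [Set.eq_empty_iff_forall_notMem]
  rintro p ⟨h1, h2, _⟩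
  have : (0:ℝ) ≤ p := Nat.cast_nonneg p
  linarith

lemma filter_card_split (P : ℕ → Prop) [DecidablePred P] (a b : ℕ) (h : a ≤ b) :
    (((Finset.Ioc 0 b).filter P).card : ℝ) =
      ((Finset.Ioc 0 a).filter P).card + ((Finset.Ioc a b).filter P).card := by
  have : (Finset.Ioc 0 b).filter P = (Finset.Ioc 0 a).filter P ∪ (Finset.Ioc a b).filter P := by
    rw [← Finset.filter_union, Finset.Ioc_union_Ioc_eq_Ioc (by omega) h]
  rw [this, Finset.card_union_of_disjoint]
  · push_cast; rfl
  · apply Finset.disjoint_filter_filter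
    rw [Finset.disjoint_left]; intro x; simp only [Finset.mem_Ioc]; omega

/-- trivial bound -/
lemma Eerr_elem_le (x : ℝ) (hx : 1 ≤ x) (q : ℕ) (hq : 1 ≤ q) (hqx : (q:ℝ) ≤ x) (a : ℕ) (x' : ℝ)
    (hx' : x' ≤ x) :
    |(piAP x' q a : ℝ) - (piR x' : ℝ) / (Nat.totient q : ℝ)| ≤ 2 * x / Nat.totient q := by
  have hphi : (0:ℝ) < Nat.totient q := by exact_mod_cast Nat.totient_pos.2 hq
  have hphi2 : (Nat.totient q : ℝ) ≤ q := by exact_mod_cast Nat.totient_le q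
  have hq0 : (0:ℝ) < q := by exact_mod_cast hq
  rcases lt_or_ge x' 0 with h | h
  · rw [piAP_neg x' h, piR_neg x' h]; simp; positivity
  have h1 : (piR x' : ℝ) ≤ x := by
    rw [piR_eq x' h]
    have : ((Finset.Ioc 0 ⌊x'⌋₊).filter Nat.Prime).card ≤ ⌊x'⌋₊ := by
      refine (Finset.card_filter_le _ _).trans ?_; simp
    have h2 : ((((Finset.Ioc 0 ⌊x'⌋₊).filter Nat.Prime).card : ℕ) : ℝ) ≤ (⌊x'⌋₊ : ℝ) := by
      exact_mod_cast this
    linarith [Nat.floor_le h]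
  have h2 : (piAP x' q a : ℝ) ≤ 2 * x / q := by
    rw [piAP_eq x' h]
    have e1 : ((Finset.Ioc 0 ⌊x'⌋₊).filter (fun p => p.Prime ∧ p % q = a % q)).card ≤
        ((Finset.Ioc 0 ⌊x'⌋₊).filter (fun p => p ≡ a [MOD q])).card := by
      apply Finset.card_le_card
      intro p; simp only [Finset.mem_filter]; rintro ⟨h1, _, h2⟩; exact ⟨h1, h2⟩
    have e2 : ((Finset.Ioc 0 ⌊x'⌋₊).filter (fun p => p ≡ a [MOD q])).card ≤ ⌊x'⌋₊ / q + 1 := by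
      have : ((Finset.Ioc 0 ⌊x'⌋₊).filter (fun p => p ≡ a [MOD q])).card ≤
         (Finset.range (⌊x'⌋₊ / q + 1)).card := by
        apply Finset.card_le_card_of_injOn (fun p => p / q)
        · intro p hp
          simp only [Finset.coe_filter, Set.mem_ofPred_eq, Finset.mem_Ioc] at hp
          simp only [Finset.coe_range, Set.mem_Iio]
          have := Nat.div_le_div_right (c := q) hp.1.2
          omega
        · intro p hp p' hp' hpp
          simp only [Finset.coe_filter, Set.mem_ofPred_eq, Finset.mem_Ioc] at hp hp'
          have hpp' : p / q = p' / q := hpp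
          have hm : p % q = p' % q := hp.2.trans hp'.2.symm
          rw [← Nat.div_add_mod p q, ← Nat.div_add_mod p' q, hpp', hm]
      simpa using this
    have e3 : ((((Finset.Ioc 0 ⌊x'⌋₊).filter (fun p => p.Prime ∧ p % q = a % q)).card : ℕ) : ℝ) ≤
        ((⌊x'⌋₊ / q + 1 : ℕ) : ℝ) := by exact_mod_cast e1.trans e2
    refine e3.trans ?_
    push_cast
    have e4 : ((⌊x'⌋₊ / q : ℕ) : ℝ) ≤ (⌊x'⌋₊ : ℝ) / q := Nat.cast_div_le
    have e5 : (⌊x'⌋₊ : ℝ) / q ≤ x / q := by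
      apply div_le_div_of_nonneg_right _ hq0.le
      linarith [Nat.floor_le h]
    have e6 : 1 ≤ x / q := by rw [le_div_iff₀ hq0]; linarith
    have e7 : 2 * x / q = x / q + x / q := by ring
    linarith
  have h3 : 2 * x / q ≤ 2 * x / Nat.totient q :=
    div_le_div_of_nonneg_left (by linarith) hphi hphi2
  have h4 : (piR x' : ℝ) / (Nat.totient q : ℝ) ≤ 2 * x / Nat.totient q := by
    apply div_le_div_of_nonneg_right _ hphi.le; linarith
  have h5 : 0 ≤ (piR x' : ℝ) / (Nat.totient q : ℝ) := by positivity
  have h6 : (0:ℝ) ≤ piAP x' q a := by positivity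
  rw [abs_le]; constructor <;> linarith

lemma Eerr_le (x : ℝ) (hx : 1 ≤ x) (q : ℕ) (hq : 1 ≤ q) (hqx : (q:ℝ) ≤ x) :
    Eerr x q ≤ 2 * x / Nat.totient q := by
  unfold Eerr
  apply csSup_le
  · exact ⟨_, 1, x, Nat.coprime_one_left q, le_rfl, rfl⟩
  · rintro r ⟨a, x', _, hx', rfl⟩
    exact Eerr_elem_le x hx q hq hqx a x' hx'

lemma Eerr_ge (x : ℝ) (hx : 1 ≤ x) (q : ℕ) (hq : 1 ≤ q) (hqx : (q:ℝ) ≤ x) (a : ℕ) (x' : ℝ)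
    (hx' : x' ≤ x) (ha : Nat.Coprime a q) :
    |(piAP x' q a : ℝ) - (piR x' : ℝ) / (Nat.totient q : ℝ)| ≤ Eerr x q := by
  unfold Eerr
  apply le_csSup
  · refine ⟨2 * x / Nat.totient q, ?_⟩
    rintro r ⟨a, x', _, hx', rfl⟩
    exact Eerr_elem_le x hx q hq hqx a x' hx'
  · exact ⟨a, x', ha, hx', rfl⟩

lemma Eerr_nonneg (x : ℝ) (q : ℕ) : 0 ≤ Eerr x q := by
  unfold Eerr
  apply Real.sSup_nonneg
  rintro r ⟨a, x', _, _, rfl⟩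
  positivity

lemma count_AP (x Y1 Y2 : ℝ) (q c : ℕ) (h0 : 0 ≤ Y1) (h1 : Y1 ≤ Y2) (h2 : Y2 ≤ x) (hx : 1 ≤ x)
    (hq : 1 ≤ q) (hqx : (q:ℝ) ≤ x) (hc : Nat.Coprime c q) :
    |(((pI Y1 Y2).filter (fun p => p % q = c % q)).card : ℝ) - ((pI Y1 Y2).card : ℝ) / Nat.totient q|
      ≤ 2 * Eerr x q := by
  have a1 := Eerr_ge x hx q hq hqx c Y2 h2 hc
  have a2 := Eerr_ge x hx q hq hqx c Y1 (h1.trans h2) hc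
  rw [piAP_eq _ (h0.trans h1), piR_eq _ (h0.trans h1)] at a1
  rw [piAP_eq _ h0, piR_eq _ h0] at a2
  have hfl : ⌊Y1⌋₊ ≤ ⌊Y2⌋₊ := Nat.floor_le_floor h1
  rw [filter_card_split _ _ _ hfl, filter_card_split _ _ _ hfl] at a1
  unfold pI
  rw [Finset.filter_filter]
  rw [add_div] at a1
  rw [abs_le] at *
  constructor <;> linarith

lemma residue_class (m A W r : ℕ) (B v0 t : ℤ) (hodd : Nat.Coprime 4 (A * (W * r)))
    (hm : Nat.Coprime m (A * (W * r))) (hWr : Nat.Coprime W r)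
    (hA : 0 < A) (hW : 0 < W) (hr : 0 < r)
    (hB : IsCoprime B (A:ℤ)) (hv : IsCoprime (A * v0 + B) (W:ℤ)) (ht : IsCoprime (A * t + B) (r:ℤ)) :
    ∃ c : ℕ, Nat.Coprime c (4 * (A * (W * r))) ∧ ∀ p : ℕ, p % (4 * (A * (W*r))) = c % (4 * (A * (W*r))) ↔
      (p % 4 = 1 ∧ ∃ n : ℤ, (m:ℤ) * p = A * n + B ∧ n ≡ v0 [ZMOD W] ∧ n ≡ t [ZMOD r]) := by
  have hWr' : IsCoprime (W:ℤ) (r:ℤ) := Nat.isCoprime_iff_coprime.2 hWr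
  have hm' : IsCoprime (m:ℤ) ((A * (W * r) : ℕ):ℤ) := Nat.isCoprime_iff_coprime.2 hm
  -- n0
  obtain ⟨n0, hn0W, hn0r⟩ : ∃ n0 : ℤ, n0 ≡ v0 [ZMOD W] ∧ n0 ≡ t [ZMOD r] := by
    obtain ⟨u, v, huv⟩ := hWr'
    refine ⟨v0 * (v * r) + t * (u * W), ?_, ?_⟩
    · rw [Int.modEq_iff_dvd]
      refine ⟨u * v0 - t * u, ?_⟩
      linear_combination (-v0) * huv
    · rw [Int.modEq_iff_dvd]
      refine ⟨v * t - v0 * v, ?_⟩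
      linear_combination (-t) * huv
  obtain ⟨c, hc4, hcQ⟩ : ∃ c : ℕ, c % 4 = 1 ∧ (m:ℤ) * c ≡ A * n0 + B [ZMOD ((A * (W * r) : ℕ):ℤ)] := by
    obtain ⟨u, v, huv⟩ := hm'
    set Q := A * (W * r) with hQ
    have hQ0 : 0 < Q := by positivity
    obtain ⟨k, hk⟩ : ∃ k : ℕ, (k:ℤ) = (u * (A * n0 + B)) % (Q:ℤ) :=
      ⟨((u * (A * n0 + B)) % (Q:ℤ)).toNat, Int.toNat_of_nonneg (Int.emod_nonneg _ (by positivity))⟩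
    obtain ⟨c, hc1, hc2⟩ := Nat.chineseRemainder hodd 1 k
    refine ⟨c, hc1, ?_⟩
    have h1 : (c:ℤ) ≡ k [ZMOD (Q:ℤ)] := (Int.natCast_modEq_iff).2 hc2
    have h2 : (k:ℤ) ≡ u * (A * n0 + B) [ZMOD (Q:ℤ)] := by rw [hk]; exact Int.mod_modEq _ _
    have h3 := ((h1.trans h2).mul_left (m:ℤ))
    refine h3.trans ?_
    rw [Int.modEq_iff_dvd]
    refine ⟨v * (A * n0 + B), ?_⟩
    linear_combination (-(A * n0 + B)) * huv
  have hQcast : ((A * (W * r) : ℕ):ℤ) = (A:ℤ) * (W * r) := by push_cast; ring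
  refine ⟨c, ?_, ?_⟩
  · apply Nat.Coprime.mul_right
    · apply Nat.Coprime.symm
      change Nat.gcd 4 c = 1
      rw [Nat.gcd_rec, hc4]
      norm_num
    · rw [← Nat.isCoprime_iff_coprime]
      have : IsCoprime ((m:ℤ) * c) ((A * (W * r) : ℕ):ℤ) := by
        obtain ⟨j, hj⟩ := (Int.modEq_iff_dvd.1 hcQ.symm)
        have e : (m:ℤ) * c = (A * n0 + B) + ((A * (W * r) : ℕ):ℤ) * j := by linarith
        rw [e]
        apply IsCoprime.add_mul_left_left
        rw [hQcast]
        apply IsCoprime.mul_right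
        · rw [add_comm]; exact IsCoprime.add_mul_left_left hB _
        · apply IsCoprime.mul_right
          · obtain ⟨i, hi⟩ := (Int.modEq_iff_dvd.1 hn0W.symm)
            have e2 : A * n0 + B = (A * v0 + B) + (W:ℤ) * (A * i) := by linear_combination (A:ℤ) * hi
            rw [e2]; exact IsCoprime.add_mul_left_left hv _
          · obtain ⟨i, hi⟩ := (Int.modEq_iff_dvd.1 hn0r.symm)
            have e2 : A * n0 + B = (A * t + B) + (r:ℤ) * (A * i) := by linear_combination (A:ℤ) * hi
            rw [e2]; exact IsCoprime.add_mul_left_left ht _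
      exact this.of_mul_left_right
  · intro p
    have h1 : p % (4 * (A * (W*r))) = c % (4 * (A * (W*r))) ↔ (p ≡ c [MOD 4] ∧ p ≡ c [MOD A * (W*r)]) :=
      (Nat.modEq_and_modEq_iff_modEq_mul hodd).symm
    rw [h1]
    apply and_congr
    · unfold Nat.ModEq; rw [hc4]
    · rw [← Int.natCast_modEq_iff]
      constructor
      · intro h
        have h2 := (h.mul_left (m:ℤ)).trans hcQ
        obtain ⟨j, hj⟩ := (Int.modEq_iff_dvd.1 h2.symm)
        rw [hQcast] at hj
        refine ⟨n0 + W * r * j, by linear_combination hj, ?_, ?_⟩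
        · refine Int.ModEq.trans ?_ hn0W
          rw [Int.modEq_iff_dvd]; exact ⟨-(r * j), by ring⟩
        · refine Int.ModEq.trans ?_ hn0r
          rw [Int.modEq_iff_dvd]; exact ⟨-(W * j), by ring⟩
      · rintro ⟨n, hn, hnW, hnr⟩
        have e1 : (W:ℤ) * r ∣ n - n0 := by
          apply hWr'.mul_dvd
          · exact Int.modEq_iff_dvd.1 (hn0W.trans hnW.symm)
          · exact Int.modEq_iff_dvd.1 (hn0r.trans hnr.symm)
        obtain ⟨j, hj⟩ := e1
        have h2 : (m:ℤ) * p ≡ m * c [ZMOD ((A * (W * r) : ℕ):ℤ)] := by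
          refine Int.ModEq.trans ?_ hcQ.symm
          rw [hn, Int.modEq_iff_dvd, hQcast]
          exact ⟨-j, by linear_combination (-(A:ℤ)) * hj⟩
        have h3 := Int.modEq_iff_dvd.1 h2
        rw [← mul_sub] at h3
        exact Int.modEq_iff_dvd.2 (hm'.symm.dvd_of_dvd_mul_left h3)

open Classical in
/-- residues `t mod r` with `r ∣ F t` and `G t` coprime to `r` -/
noncomputable def TS (F G : ℤ → ℤ) (r : ℕ) : Finset ℕ :=
  (Finset.range r).filter (fun t : ℕ => (r:ℤ) ∣ F t ∧ IsCoprime (G t) (r:ℤ))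

/-- congruence preserving -/
def CP (F : ℤ → ℤ) : Prop := ∀ n x y : ℤ, x ≡ y [ZMOD n] → F x ≡ F y [ZMOD n]

lemma CP_dvd {F : ℤ → ℤ} (hF : CP F) {n x y : ℤ} (h : x ≡ y [ZMOD n]) : n ∣ F x ↔ n ∣ F y := by
  have := hF n x y h
  rw [← Int.modEq_zero_iff_dvd, ← Int.modEq_zero_iff_dvd]
  exact ⟨fun h => this.symm.trans h, fun h => this.trans h⟩

lemma CP_cop {F : ℤ → ℤ} (hF : CP F) {n x y : ℤ} (h : x ≡ y [ZMOD n]) :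
    IsCoprime (F x) n ↔ IsCoprime (F y) n := by
  have aux : ∀ x y, x ≡ y [ZMOD n] → IsCoprime (F x) n → IsCoprime (F y) n := by
    intro x y h hc
    obtain ⟨i, hi⟩ := (Int.modEq_iff_dvd.1 (hF n x y h))
    have : F y = F x + n * i := by linarith
    rw [this]
    exact IsCoprime.add_mul_left_left hc _
  exact ⟨aux x y h, aux y x h.symm⟩

lemma mem_TS (F G : ℤ → ℤ) (r t : ℕ) : t ∈ TS F G r ↔ t < r ∧ (r:ℤ) ∣ F t ∧ IsCoprime (G t) (r:ℤ) := by
  simp [TS]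

lemma TS_mul (F G : ℤ → ℤ) (hF : CP F) (hG : CP G) (u v : ℕ) (hu : 0 < u) (hv : 0 < v)
    (h : Nat.Coprime u v) : (TS F G (u * v)).card = (TS F G u).card * (TS F G v).card := by
  rw [← Finset.card_product]
  have key : ∀ t x y : ℕ, t ≡ x [MOD u] → t ≡ y [MOD v] → (((u * v : ℕ):ℤ) ∣ F t ∧ IsCoprime (G t) ((u * v : ℕ):ℤ) ↔
      ((u:ℤ) ∣ F x ∧ IsCoprime (G x) (u:ℤ)) ∧ ((v:ℤ) ∣ F y ∧ IsCoprime (G y) (v:ℤ))) := by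
    intro t x y h1 h2
    have h1' := (Int.natCast_modEq_iff).2 h1
    have h2' := (Int.natCast_modEq_iff).2 h2
    rw [← CP_dvd hF h1', ← CP_dvd hF h2', ← CP_cop hG h1', ← CP_cop hG h2']
    push_cast
    rw [IsCoprime.mul_right_iff]
    constructor
    · rintro ⟨ha, hb, hc⟩
      exact ⟨⟨(Dvd.intro _ rfl).trans ha, hb⟩, ⟨(Dvd.intro_left _ rfl).trans ha, hc⟩⟩
    · rintro ⟨⟨ha, hb⟩, hc, hd⟩
      exact ⟨IsCoprime.mul_dvd (Nat.isCoprime_iff_coprime.2 h) ha hc, hb, hd⟩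
  refine Finset.card_bij' (fun t _ => (t % u, t % v))
    (fun xy _ => (Nat.chineseRemainder h xy.1 xy.2 : ℕ)) ?_ ?_ ?_ ?_
  · intro t ht
    rw [mem_TS] at ht
    simp only [Finset.mem_product, mem_TS]
    have := (key t (t % u) (t % v) (Nat.mod_modEq _ _).symm (Nat.mod_modEq _ _).symm).1 ht.2
    exact ⟨⟨Nat.mod_lt _ hu, this.1⟩, ⟨Nat.mod_lt _ hv, this.2⟩⟩
  · rintro ⟨x, y⟩ hxy
    simp only [Finset.mem_product, mem_TS] at hxy
    rw [mem_TS]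
    have h3 := (Nat.chineseRemainder h x y).2
    exact ⟨Nat.chineseRemainder_lt_mul h x y hu.ne' hv.ne',
      (key _ x y h3.1 h3.2).2 ⟨hxy.1.2, hxy.2.2⟩⟩
  · intro t ht
    rw [mem_TS] at ht
    have h3 := (Nat.chineseRemainder h (t % u) (t % v)).2
    have h4 : (Nat.chineseRemainder h (t % u) (t % v) : ℕ) ≡ t [MOD u * v] :=
      (Nat.modEq_and_modEq_iff_modEq_mul h).1
        ⟨h3.1.trans (Nat.mod_modEq _ _), h3.2.trans (Nat.mod_modEq _ _)⟩
    exact Nat.ModEq.eq_of_lt_of_lt h4 (Nat.chineseRemainder_lt_mul h _ _ hu.ne' hv.ne') ht.1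
  · rintro ⟨x, y⟩ hxy
    simp only [Finset.mem_product, mem_TS] at hxy
    have h3 := (Nat.chineseRemainder h x y).2
    simp only [Prod.mk.injEq]
    constructor
    · exact Eq.trans h3.1 (Nat.mod_eq_of_lt hxy.1.1)
    · exact Eq.trans h3.2 (Nat.mod_eq_of_lt hxy.2.1)

lemma TS_prod (F G : ℤ → ℤ) (hF : CP F) (hG : CP G) (S : Finset ℕ) (hS : ∀ p ∈ S, p.Prime) :
    (TS F G (∏ p ∈ S, p)).card = ∏ p ∈ S, (TS F G p).card := by
  induction S using Finset.induction_on with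
  | empty =>
    simp only [Finset.prod_empty]
    have : TS F G 1 = {0} := by
      ext t; rw [mem_TS]; simp [isCoprime_one_right]
    rw [this]; simp
  | insert p S hp ih =>
    have hp' := hS p (Finset.mem_insert_self p S)
    have hS' : ∀ q ∈ S, q.Prime := fun q hq => hS q (Finset.mem_insert_of_mem hq)
    rw [Finset.prod_insert hp, Finset.prod_insert hp, TS_mul F G hF hG, ih hS']
    · exact hp'.pos
    · exact Finset.prod_pos (fun q hq => (hS' q hq).pos)
    · apply Nat.Coprime.prod_right
      intro q hq
      rw [Nat.coprime_primes hp' (hS' q hq)]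
      rintro rfl; exact hp hq

lemma TS_sqf (F G : ℤ → ℤ) (hF : CP F) (hG : CP G) (r : ℕ) (hr : Squarefree r) :
    (TS F G r).card = ∏ p ∈ r.primeFactors, (TS F G p).card := by
  conv_lhs => rw [← Nat.prod_primeFactors_of_squarefree hr]
  exact TS_prod F G hF hG _ (fun p hp => Nat.prime_of_mem_primeFactors hp)

lemma lin_root (A B : ℤ) (p : ℕ) (hp : p.Prime) (hA : ¬ (p:ℤ) ∣ A) :
    ∃ t0 : ℕ, t0 < p ∧ (p:ℤ) ∣ A * t0 + B := by
  have hc : IsCoprime A (p:ℤ) := by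
    rw [isCoprime_comm]
    exact (Prime.coprime_iff_not_dvd (Nat.prime_iff_prime_int.1 hp)).2 hA
  obtain ⟨u, v, huv⟩ := hc
  have hp0 : (p:ℤ) ≠ 0 := by exact_mod_cast hp.pos.ne'
  refine ⟨((-u * B) % (p:ℤ)).toNat, ?_, ?_⟩
  · have := Int.emod_lt_of_pos (-u * B) (by exact_mod_cast hp.pos : (0:ℤ) < p)
    have := Int.emod_nonneg (-u * B) hp0
    omega
  · rw [Int.toNat_of_nonneg (Int.emod_nonneg _ hp0)]
    have h := Int.emod_add_mul_ediv (-u * B) p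
    have : (-u*B) % (p:ℤ) = -u*B - p * ((-u*B)/p) := by linarith
    rw [this]
    refine ⟨v * B - A * ((-u*B)/p), ?_⟩
    linear_combination (-B) * huv

lemma lin_root_unique (A B : ℤ) (p : ℕ) (hp : p.Prime) (hA : ¬ (p:ℤ) ∣ A) (t s : ℕ) (ht : t < p)
    (hs : s < p) (h1 : (p:ℤ) ∣ A * t + B) (h2 : (p:ℤ) ∣ A * s + B) : t = s := by
  have h3 : (p:ℤ) ∣ A * ((t:ℤ) - s) := by
    have := dvd_sub h1 h2
    have e : A * ((t:ℤ) - s) = A * t + B - (A * s + B) := by ring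
    rwa [e]
  have h4 := ((Nat.prime_iff_prime_int.1 hp).dvd_or_dvd h3).resolve_left hA
  obtain ⟨j, hj⟩ := h4
  have : j = 0 := by
    by_contra hj0
    rcases lt_or_gt_of_ne hj0 with h | h
    · have : (p:ℤ) * j ≤ p * (-1) := by apply mul_le_mul_of_nonneg_left <;> omega
      omega
    · have : (p:ℤ) * 1 ≤ p * j := by apply mul_le_mul_of_nonneg_left <;> omega
      omega
  subst this
  omega

lemma TS_prime (F : ℤ → ℤ) (A B : ℤ) (p : ℕ) (hp : p.Prime) (hA : ¬ (p:ℤ) ∣ A)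
    (hd : ∀ t : ℤ, A * t + B ∣ F t) :
    ((TS F (fun t => A * t + B) p).card + 1) = ({n : ℕ | n < p ∧ (p : ℤ) ∣ F n}).ncard := by
  obtain ⟨t0, h0, h1⟩ := lin_root A B p hp hA
  have hn : t0 ∉ TS F (fun t => A * t + B) p := by
    rw [mem_TS]
    rintro ⟨_, _, h⟩
    rw [isCoprime_comm] at h
    exact (Prime.coprime_iff_not_dvd (Nat.prime_iff_prime_int.1 hp)).1 h h1
  rw [← Finset.card_insert_of_notMem hn, ← Set.ncard_coe_finset]
  congr 1
  ext t
  simp only [Finset.coe_insert, Set.mem_insert_iff, Finset.mem_coe, mem_TS, Set.mem_ofPred_eq]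
  constructor
  · rintro (rfl | ⟨h, h', _⟩)
    · exact ⟨h0, h1.trans (hd _)⟩
    · exact ⟨h, h'⟩
  · rintro ⟨h, h'⟩
    by_cases hh : (p:ℤ) ∣ A * t + B
    · left; exact lin_root_unique A B p hp hA t t0 h h0 hh h1
    · right
      refine ⟨h, h', ?_⟩
      rw [isCoprime_comm]
      exact (Prime.coprime_iff_not_dvd (Nat.prime_iff_prime_int.1 hp)).2 hh

lemma nu_le (k : ℕ) (a b : Fin k → ℤ) (p : ℕ) (hp : p.Prime) (ha : ∀ i, ¬ (p:ℤ) ∣ a i) :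
    ({n : ℕ | n < p ∧ (p : ℤ) ∣ ∏ i, (a i * (n : ℤ) + b i)}).ncard ≤ k := by
  choose f hf1 hf2 using fun i => lin_root (a i) (b i) p hp (ha i)
  have hsub : {n : ℕ | n < p ∧ (p : ℤ) ∣ ∏ i, (a i * (n : ℤ) + b i)} ⊆
      ((Finset.univ.image f : Finset ℕ) : Set ℕ) := by
    rintro n ⟨hn, hd⟩
    obtain ⟨i, _, hi⟩ := (Prime.dvd_finsetProd_iff (Nat.prime_iff_prime_int.1 hp) _).1 hd
    simp only [Finset.coe_image, Finset.coe_univ, Set.image_univ, Set.mem_range]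
    exact ⟨i, lin_root_unique _ _ p hp (ha i) _ _ (hf1 i) hn (hf2 i) hi⟩
  refine (Set.ncard_le_ncard hsub (Finset.finite_toSet _)).trans ?_
  rw [Set.ncard_coe_finset]
  refine Finset.card_image_le.trans ?_
  simp

lemma CP_lin (A B : ℤ) : CP (fun t => A * t + B) := by
  intro n x y h
  exact (h.mul_left A).add_right B

lemma CP_prod {k : ℕ} (a b : Fin k → ℤ) : CP (fun t => ∏ i, (a i * t + b i)) := by
  intro n x y h
  exact Int.ModEq.prod (fun i _ => (h.mul_left (a i)).add_right (b i))

open Classical in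
/-- the integers `n ∈ (X, 2X]`, `n ≡ v0 (W)` with `A n + B = m p`, `p ≡ 1 (4)` prime -/
noncomputable def NS (X : ℝ) (A W : ℕ) (B v0 : ℤ) (m : ℕ) : Finset ℤ :=
  (Finset.Icc (⌊X⌋ + 1) ⌊2 * X⌋).filter (fun n => n % (W:ℤ) = v0 % (W:ℤ) ∧
    ∃ p : ℕ, p.Prime ∧ p % 4 = 1 ∧ (m:ℤ) * p = A * n + B)

lemma mem_NS (X : ℝ) (A W : ℕ) (B v0 : ℤ) (m : ℕ) (n : ℤ) : n ∈ NS X A W B v0 m ↔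
    (X < n ∧ (n:ℝ) ≤ 2 * X) ∧ n % (W:ℤ) = v0 % (W:ℤ) ∧
    ∃ p : ℕ, p.Prime ∧ p % 4 = 1 ∧ (m:ℤ) * p = A * n + B := by
  simp only [NS, Finset.mem_filter, Finset.mem_Icc, Int.add_one_le_iff, Int.floor_lt, Int.le_floor]

lemma P1_cop_P3 (m r : ℕ) (hm : InP1 m) (hr : InP3 r) : Nat.Coprime m r := by
  apply Nat.Coprime.symm
  rw [Nat.coprime_iff_gcd_eq_one]
  by_contra h
  obtain ⟨p, hp, hd⟩ := Nat.exists_prime_and_dvd h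
  have h1 := hm p hp (hd.trans (Nat.gcd_dvd_right _ _))
  have h2 := hr p hp (hd.trans (Nat.gcd_dvd_left _ _))
  omega

lemma InP1_prime (p : ℕ) (hp : p.Prime) (h : p % 4 = 1) : InP1 p := by
  intro q hq hd
  rw [(Nat.prime_dvd_prime_iff_eq hq hp).1 hd]; exact h

open Classical in
lemma NS_fiber (X : ℝ) (A W : ℕ) (B v0 : ℤ) (m r t c : ℕ) (F : ℤ → ℤ) (hX : 0 < X)
    (hF : CP F) (hm0 : 0 < m) (hA : 0 < A) (hB0 : 0 < B) (q : ℕ)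
    (ht : t ∈ TS F (fun t => A * t + B) r)
    (hc : ∀ p : ℕ, p % q = c % q ↔
      (p % 4 = 1 ∧ ∃ n : ℤ, (m:ℤ) * p = A * n + B ∧ n ≡ v0 [ZMOD W] ∧ n ≡ t [ZMOD r])) :
    (((NS X A W B v0 m).filter (fun n => (r:ℤ) ∣ F n)).filter (fun n => (n % (r:ℤ)).toNat = t)).card
     = ((pI ((A * X + B) / m) ((A * (2 * X) + B) / m)).filter (fun p => p % q = c % q)).card := by
  have hm' : (0:ℝ) < m := by exact_mod_cast hm0
  have hA' : (0:ℝ) < A := by exact_mod_cast hA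
  have hB' : (0:ℝ) < B := by exact_mod_cast hB0
  rw [mem_TS] at ht
  have hr0 : 0 < r := by omega
  have hr0' : (r:ℤ) ≠ 0 := by exact_mod_cast hr0.ne'
  have hmodt : ∀ n : ℤ, (n % (r:ℤ)).toNat = t ↔ n ≡ t [ZMOD r] := by
    intro n
    have h1 := Int.emod_nonneg n hr0'
    have h2 : (t:ℤ) % (r:ℤ) = t := Int.emod_eq_of_lt (by omega) (by omega)
    unfold Int.ModEq
    rw [h2]
    omega
  have hval : ∀ (n : ℤ) (p : ℕ), (m:ℤ) * p = A * n + B → ((A * n + B) / (m:ℤ)).toNat = p := by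
    intro n p h
    rw [← h, Int.mul_ediv_cancel_left _ (by exact_mod_cast hm0.ne')]
    simp
  have hrange : ∀ (n : ℤ) (p : ℕ), (m:ℤ) * p = A * n + B →
      ((X < n ∧ (n:ℝ) ≤ 2 * X) ↔ (⌊(A * X + B) / m⌋₊ < p ∧ p ≤ ⌊(A * (2 * X) + B) / m⌋₊)) := by
    intro n p h
    have h' : (m:ℝ) * p = A * n + B := by exact_mod_cast h
    rw [Nat.floor_lt (by positivity), Nat.le_floor_iff (by positivity), div_lt_iff₀ hm', le_div_iff₀ hm',
      mul_comm (p:ℝ), h']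
    constructor
    · rintro ⟨h1, h2⟩
      exact ⟨by gcongr, by gcongr⟩
    · rintro ⟨h1, h2⟩
      exact ⟨lt_of_mul_lt_mul_left (by linarith : (A:ℝ) * X < A * n) hA'.le,
        le_of_mul_le_mul_left (by linarith : (A:ℝ) * n ≤ A * (2 * X)) hA'⟩
  apply Finset.card_bij (fun n _ => ((A * n + B) / (m:ℤ)).toNat)
  · intro n hn
    simp only [Finset.mem_filter, mem_NS, hmodt] at hn
    obtain ⟨⟨⟨h1, h2, p, hp, hp4, h3⟩, h4⟩, h5⟩ := hn
    rw [hval n p h3]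
    simp only [pI, Finset.mem_filter, Finset.mem_Ioc]
    exact ⟨⟨(hrange n p h3).1 h1, hp⟩, (hc p).2 ⟨hp4, n, h3, h2, h5⟩⟩
  · intro n hn n' hn' he
    simp only [Finset.mem_filter, mem_NS] at hn hn'
    obtain ⟨⟨⟨h1, h2, p, hp, hp4, h3⟩, h4⟩, h5⟩ := hn
    obtain ⟨⟨⟨h1', h2', p', hp', hp4', h3'⟩, h4'⟩, h5'⟩ := hn'
    rw [hval n p h3, hval n' p' h3'] at he
    subst he
    have : (A:ℤ) * n = A * n' := by linarith
    exact mul_left_cancel₀ (by exact_mod_cast hA.ne') this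
  · intro p hp
    simp only [pI, Finset.mem_filter, Finset.mem_Ioc] at hp
    obtain ⟨⟨h1, hp⟩, h2⟩ := hp
    obtain ⟨hp4, n, h3, h4, h5⟩ := (hc p).1 h2
    refine ⟨n, ?_, hval n p h3⟩
    simp only [Finset.mem_filter, mem_NS, hmodt]
    exact ⟨⟨⟨(hrange n p h3).2 h1, h4, p, hp, hp4, h3⟩, (CP_dvd hF h5).2 ht.2.1⟩, h5⟩

open Classical in
lemma NS_count (X x : ℝ) (A W : ℕ) (B v0 : ℤ) (m r : ℕ) (F : ℤ → ℤ) (hX : 0 < X)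
    (hF : CP F) (hm0 : 0 < m) (hA : 0 < A) (hB0 : 0 < B) (hW : 0 < W) (hr : 0 < r)
    (hr3 : InP3 r) (hm1 : InP1 m)
    (hodd : Nat.Coprime 4 (A * (W * r))) (hm : Nat.Coprime m (A * (W * r))) (hWr : Nat.Coprime W r)
    (hB : IsCoprime B (A:ℤ)) (hv : IsCoprime (A * v0 + B) (W:ℤ))
    (hx1 : 1 ≤ x) (hx : (A * (2 * X) + B) / m ≤ x) (hq : ((4 * (A * (W * r)) : ℕ) : ℝ) ≤ x) :
    |(((NS X A W B v0 m).filter (fun n => (r:ℤ) ∣ F n)).card : ℝ) -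
      ((TS F (fun t => A * t + B) r).card : ℝ) *
        ((pI ((A * X + B) / m) ((A * (2 * X) + B) / m)).card : ℝ) / Nat.totient (4 * (A * (W * r)))|
     ≤ 2 * (TS F (fun t => A * t + B) r).card * Eerr x (4 * (A * (W * r))) := by
  set T := TS F (fun t => A * t + B) r with hT
  have hr0' : (r:ℤ) ≠ 0 := by exact_mod_cast hr.ne'
  have hB' : (0:ℝ) < B := by exact_mod_cast hB0
  have hmaps : ∀ n ∈ (NS X A W B v0 m).filter (fun n => (r:ℤ) ∣ F n), (n % (r:ℤ)).toNat ∈ T := by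
    intro n hn
    simp only [Finset.mem_filter, mem_NS] at hn
    obtain ⟨⟨h1, h2, p, hp, hp4, h3⟩, h4⟩ := hn
    have e : (((n % (r:ℤ)).toNat : ℕ) : ℤ) = n % (r:ℤ) := Int.toNat_of_nonneg (Int.emod_nonneg _ hr0')
    have hmod : (((n % (r:ℤ)).toNat : ℕ) : ℤ) ≡ n [ZMOD r] := by rw [e]; exact Int.mod_modEq _ _
    rw [hT, mem_TS]
    refine ⟨?_, (CP_dvd hF hmod).2 h4, (CP_cop (CP_lin A B) hmod).2 ?_⟩
    · have := Int.emod_lt_of_pos n (by exact_mod_cast hr : (0:ℤ) < r)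
      omega
    · rw [← h3]
      apply IsCoprime.mul_left
      · exact Nat.isCoprime_iff_coprime.2 (P1_cop_P3 m r hm1 hr3)
      · exact Nat.isCoprime_iff_coprime.2 (P1_cop_P3 p r (InP1_prime p hp hp4) hr3)
  rw [Finset.card_eq_sum_card_fiberwise hmaps]
  have hmain : ∀ t ∈ T, |((((NS X A W B v0 m).filter (fun n => (r:ℤ) ∣ F n)).filter
      (fun n => (n % (r:ℤ)).toNat = t)).card : ℝ) - ((pI ((A * X + B) / m) ((A * (2 * X) + B) / m)).card : ℝ)
        / Nat.totient (4 * (A * (W * r)))| ≤ 2 * Eerr x (4 * (A * (W * r))) := by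
    intro t ht
    have ht' := ht
    rw [hT, mem_TS] at ht'
    obtain ⟨c, hc1, hc2⟩ := residue_class m A W r B v0 t hodd hm hWr hA hW hr hB hv ht'.2.2
    rw [NS_fiber X A W B v0 m r t c F hX hF hm0 hA hB0 _ ht hc2]
    apply count_AP x _ _ _ c (by positivity) _ hx hx1 (Nat.succ_le_of_lt (by positivity)) hq hc1
    gcongr; linarith
  have e : ((T.card : ℝ) * ((pI ((A * X + B) / m) ((A * (2 * X) + B) / m)).card : ℝ) / Nat.totient (4 * (A * (W * r))))
     = ∑ t ∈ T, ((pI ((A * X + B) / m) ((A * (2 * X) + B) / m)).card : ℝ) / Nat.totient (4 * (A * (W * r))) := by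
    rw [Finset.sum_const, nsmul_eq_mul, mul_div_assoc]
  rw [e]
  push_cast
  rw [← Finset.sum_sub_distrib]
  refine (Finset.abs_sum_le_sum_abs _ _).trans ((Finset.sum_le_sum hmain).trans ?_)
  rw [Finset.sum_const, nsmul_eq_mul]
  linarith

lemma pow_omega_le (G r : ℕ) (hr : Squarefree r) :
    ((G:ℝ) + 1) ^ r.primeFactors.card ≤ ∑ d ∈ r.divisors, (G:ℝ) ^ d.primeFactors.card := by
  have h := Finset.sum_pow_mul_eq_add_pow (G:ℝ) 1 r.primeFactors
  rw [← h]
  have hprime : ∀ S ∈ r.primeFactors.powerset, ∀ p ∈ S, p.Prime := fun S hS p hp =>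
    Nat.prime_of_mem_primeFactors (Finset.mem_powerset.1 hS hp)
  have hinj : Set.InjOn (fun S : Finset ℕ => ∏ p ∈ S, p) (r.primeFactors.powerset : Set (Finset ℕ)) := by
    intro S hS S' hS' he
    have h1 := Nat.primeFactors_prod (hprime S hS)
    have h2 := Nat.primeFactors_prod (hprime S' hS')
    rw [← h1, ← h2]
    exact congrArg _ he
  calc ∑ S ∈ r.primeFactors.powerset, (G:ℝ) ^ S.card * 1 ^ (r.primeFactors.card - S.card)
      = ∑ S ∈ r.primeFactors.powerset, (G:ℝ) ^ (∏ p ∈ S, p).primeFactors.card := by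
        apply Finset.sum_congr rfl
        intro S hS
        rw [Nat.primeFactors_prod (hprime S hS)]; simp
    _ = ∑ d ∈ r.primeFactors.powerset.image (fun S : Finset ℕ => ∏ p ∈ S, p), (G:ℝ) ^ d.primeFactors.card := by
        rw [Finset.sum_image hinj]
    _ ≤ _ := by
        apply Finset.sum_le_sum_of_subset_of_nonneg
        · intro d hd
          obtain ⟨S, hS, rfl⟩ := Finset.mem_image.1 hd
          rw [Nat.mem_divisors]
          refine ⟨?_, hr.ne_zero⟩
          conv_rhs => rw [← Nat.prod_primeFactors_of_squarefree hr]
          exact Finset.prod_dvd_prod_of_subset _ _ _ (Finset.mem_powerset.1 hS)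
        · intros; positivity

lemma sum_mult (R d : ℕ) (hd : 0 < d) : ∑ r ∈ (Finset.Ioc 0 R).filter (fun r => d ∣ r), (1:ℝ) / r ≤
    1 / d * Hn R := by
  unfold Hn
  rw [Finset.mul_sum]
  calc _ ≤ ∑ r ∈ (Finset.Ioc 0 R).image (fun e => d * e), (1:ℝ) / r := by
        apply Finset.sum_le_sum_of_subset_of_nonneg
        · intro r hr
          simp only [Finset.mem_filter, Finset.mem_Ioc] at hr
          obtain ⟨⟨h1, h2⟩, e, rfl⟩ := hr
          refine Finset.mem_image.2 ⟨e, ?_, rfl⟩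
          rw [Finset.mem_Ioc]
          exact ⟨Nat.pos_of_mul_pos_left h1, (Nat.le_mul_of_pos_left e hd).trans h2⟩
        · intros; positivity
    _ = _ := by
        rw [Finset.sum_image]
        · apply Finset.sum_congr rfl
          intro e _
          push_cast
          rw [div_mul_div_comm, one_mul]
        · intro x _ y _ h
          exact Nat.eq_of_mul_eq_mul_left hd h

lemma sum_omega (R G : ℕ) : ∑ r ∈ (Finset.Ioc 0 R).filter Squarefree,
    (G:ℝ) ^ r.primeFactors.card / r ≤ Hn R ^ G := by
  induction G with
  | zero =>
    simp only [Nat.cast_zero, pow_zero]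
    calc _ ≤ ∑ r ∈ (Finset.Ioc 0 R).filter Squarefree, (if r = 1 then (1:ℝ) else 0) := by
          apply Finset.sum_le_sum
          intro r hr
          simp only [Finset.mem_filter, Finset.mem_Ioc] at hr
          split_ifs with h
          · subst h; simp
          · have : r.primeFactors.card ≠ 0 := by
              rw [Finset.card_ne_zero, Nat.nonempty_primeFactors]
              omega
            rw [zero_pow this]; simp
      _ ≤ 1 := by
          rw [Finset.sum_ite_eq']
          split_ifs <;> norm_num
  | succ G ih =>
    calc _ ≤ ∑ r ∈ (Finset.Ioc 0 R).filter Squarefree, ∑ d ∈ r.divisors,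
            (G:ℝ) ^ d.primeFactors.card * (1 / r) := by
          apply Finset.sum_le_sum
          intro r hr
          simp only [Finset.mem_filter, Finset.mem_Ioc] at hr
          rw [← Finset.sum_mul, div_eq_mul_one_div]
          apply mul_le_mul_of_nonneg_right _ (by positivity)
          push_cast
          exact pow_omega_le G r hr.2
      _ = ∑ d ∈ (Finset.Ioc 0 R).filter Squarefree, ∑ r ∈ ((Finset.Ioc 0 R).filter Squarefree).filter (fun r => d ∣ r),
            (G:ℝ) ^ d.primeFactors.card * (1 / r) := by
          apply Finset.sum_comm'
          intro r d
          simp only [Finset.mem_filter, Finset.mem_Ioc, Nat.mem_divisors]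
          constructor
          · rintro ⟨⟨⟨h1, h2⟩, h3⟩, h4, h5⟩
            exact ⟨⟨⟨⟨h1, h2⟩, h3⟩, h4⟩, ⟨Nat.pos_of_dvd_of_pos h4 h1, (Nat.le_of_dvd h1 h4).trans h2⟩,
              h3.squarefree_of_dvd h4⟩
          · rintro ⟨⟨⟨⟨h1, h2⟩, h3⟩, h4⟩, _⟩
            exact ⟨⟨⟨h1, h2⟩, h3⟩, h4, by omega⟩
      _ ≤ ∑ d ∈ (Finset.Ioc 0 R).filter Squarefree, (G:ℝ) ^ d.primeFactors.card / d * Hn R := by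
          apply Finset.sum_le_sum
          intro d hd
          simp only [Finset.mem_filter, Finset.mem_Ioc] at hd
          rw [← Finset.mul_sum, div_eq_mul_one_div, mul_assoc]
          apply mul_le_mul_of_nonneg_left _ (by positivity)
          refine le_trans ?_ (sum_mult R d hd.1.1)
          apply Finset.sum_le_sum_of_subset_of_nonneg
          · intro r; simp only [Finset.mem_filter]; tauto
          · intros; positivity
      _ ≤ _ := by
          rw [← Finset.sum_mul, pow_succ]
          exact mul_le_mul_of_nonneg_right ih (Hn_nonneg R)

/-- abstract error bound -/
lemma err_abs (R : Finset ℕ) (N g : ℕ) (hR : ∀ r ∈ R, 0 < r ∧ r ≤ N ∧ Squarefree r) (E : ℕ → ℝ)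
    (S V T : ℝ) (hT : 0 < T) (hE0 : ∀ r ∈ R, 0 ≤ E r) (hV : 0 ≤ V)
    (hS : ∑ r ∈ R, E r ≤ S) (hE : ∀ r ∈ R, E r ≤ V * 2 ^ r.primeFactors.card / r) :
    ∑ r ∈ R, (g:ℝ) ^ r.primeFactors.card * E r ≤ T * S + V / T * Hn N ^ (2 * g ^ 2) := by
  have h1 : ∀ r ∈ R, (g:ℝ) ^ r.primeFactors.card * E r ≤ T * E r +
      V / T * (((2 * g ^ 2 : ℕ):ℝ) ^ r.primeFactors.card / r) := by
    intro r hr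
    set z := (g:ℝ) ^ r.primeFactors.card with hz
    have hz0 : 0 ≤ z := by positivity
    have h2 : z ≤ T + z ^ 2 / T := by
      have : z * T ≤ T * T + z ^ 2 := by nlinarith [sq_nonneg (z - T)]
      have h3 : T + z ^ 2 / T = (T * T + z ^ 2) / T := by field_simp
      rw [h3, le_div_iff₀ hT]; exact this
    have h4 : z * E r ≤ T * E r + z ^ 2 / T * E r := by
      have := mul_le_mul_of_nonneg_right h2 (hE0 r hr)
      linarith
    have h5 : z ^ 2 / T * E r ≤ z ^ 2 / T * (V * 2 ^ r.primeFactors.card / r) :=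
      mul_le_mul_of_nonneg_left (hE r hr) (by positivity)
    have h6 : z ^ 2 / T * (V * 2 ^ r.primeFactors.card / r) = V / T * (((2 * g ^ 2 : ℕ):ℝ) ^ r.primeFactors.card / r) := by
      rw [hz]; push_cast; rw [mul_pow, ← pow_mul, ← pow_mul, mul_comm 2]; ring
    linarith
  calc _ ≤ _ := Finset.sum_le_sum h1
    _ = T * ∑ r ∈ R, E r + V / T * ∑ r ∈ R, (((2 * g ^ 2 : ℕ):ℝ) ^ r.primeFactors.card / r) := by
      rw [Finset.sum_add_distrib, Finset.mul_sum, Finset.mul_sum]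
    _ ≤ _ := by
      have h7 : ∑ r ∈ R, (((2 * g ^ 2 : ℕ):ℝ) ^ r.primeFactors.card / r) ≤ Hn N ^ (2 * g ^ 2) := by
        refine le_trans ?_ (sum_omega N (2 * g ^ 2))
        apply Finset.sum_le_sum_of_subset_of_nonneg
        · intro r hr
          simp only [Finset.mem_filter, Finset.mem_Ioc]
          obtain ⟨h1, h2, h3⟩ := hR r hr
          exact ⟨⟨h1, h2⟩, h3⟩
        · intros; positivity
      have h8 := mul_le_mul_of_nonneg_left hS hT.le
      have h9 := mul_le_mul_of_nonneg_left h7 (by positivity : 0 ≤ V / T)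
      linarith

lemma card_div_sqf (r : ℕ) (hr : Squarefree r) : r.divisors.card ≤ 2 ^ r.primeFactors.card := by
  rw [Nat.card_divisors hr.ne_zero, ← Finset.prod_const]
  apply Finset.prod_le_prod'
  intro p _
  have := (Nat.squarefree_iff_factorization_le_one hr.ne_zero).1 hr p
  omega

lemma primeFactors_lcm' (d e : ℕ) (hd : d ≠ 0) (he : e ≠ 0) :
    (Nat.lcm d e).primeFactors = (d * e).primeFactors := by
  ext p
  simp only [Nat.mem_primeFactors]
  constructor
  · rintro ⟨hp, h1, h2⟩
    exact ⟨hp, h1.trans (Nat.lcm_dvd_mul d e), mul_ne_zero hd he⟩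
  · rintro ⟨hp, h1, h2⟩
    refine ⟨hp, ?_, Nat.lcm_ne_zero hd he⟩
    rcases (Nat.Prime.dvd_mul hp).1 h1 with h | h
    · exact h.trans (Nat.dvd_lcm_left d e)
    · exact h.trans (Nat.dvd_lcm_right d e)

lemma sqf_lcm (d e : ℕ) (hd : Squarefree d) (he : Squarefree e) : Squarefree (Nat.lcm d e) := by
  have h0 := Nat.lcm_ne_zero hd.ne_zero he.ne_zero
  rw [Nat.squarefree_iff_factorization_le_one h0]
  intro p
  rw [Nat.factorization_lcm hd.ne_zero he.ne_zero]
  have h1 := (Nat.squarefree_iff_factorization_le_one hd.ne_zero).1 hd p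
  have h2 := (Nat.squarefree_iff_factorization_le_one he.ne_zero).1 he p
  simp [h1, h2]

lemma InP3_lcm (d e : ℕ) (hd : InP3 d) (he : InP3 e) : InP3 (Nat.lcm d e) := by
  intro p hp h
  rcases (Nat.Prime.dvd_mul hp).1 (h.trans (Nat.lcm_dvd_mul d e)) with h | h
  · exact hd p hp h
  · exact he p hp h

lemma cop_lcm (d e N : ℕ) (hd : Nat.Coprime d N) (he : Nat.Coprime e N) : Nat.Coprime (Nat.lcm d e) N :=
  Nat.Coprime.coprime_dvd_left (Nat.lcm_dvd_mul d e) (hd.mul_left he)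

lemma pair_sum (D R : Finset ℕ) (g : ℕ → ℝ) (hD : ∀ d ∈ D, ∀ e ∈ D, Nat.lcm d e ∈ R)
    (hR : ∀ r ∈ R, Squarefree r) (hg : ∀ r ∈ R, 0 ≤ g r) :
    ∑ d ∈ D, ∑ e ∈ D, g (Nat.lcm d e) ≤ ∑ r ∈ R, 4 ^ r.primeFactors.card * g r := by
  rw [← Finset.sum_product' D D (fun d e => g (Nat.lcm d e))]
  rw [← Finset.sum_fiberwise_of_maps_to (s := D ×ˢ D) (t := R) (g := fun x => Nat.lcm x.1 x.2)]
  · apply Finset.sum_le_sum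
    intro r hr
    have h1 : ∑ x ∈ (D ×ˢ D).filter (fun x => Nat.lcm x.1 x.2 = r), g (Nat.lcm x.1 x.2) =
        ((D ×ˢ D).filter (fun x => Nat.lcm x.1 x.2 = r)).card * g r := by
      rw [← nsmul_eq_mul, ← Finset.sum_const]
      apply Finset.sum_congr rfl
      intro x hx
      rw [(Finset.mem_filter.1 hx).2]
    rw [h1]
    apply mul_le_mul_of_nonneg_right _ (hg r hr)
    have h2 : ((D ×ˢ D).filter (fun x => Nat.lcm x.1 x.2 = r)).card ≤ (r.divisors ×ˢ r.divisors).card := by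
      apply Finset.card_le_card
      rintro ⟨d, e⟩ hx
      simp only [Finset.mem_filter] at hx
      simp only [Finset.mem_product, Nat.mem_divisors]
      have := (hR r hr).ne_zero
      exact ⟨⟨hx.2 ▸ Nat.dvd_lcm_left d e, this⟩, ⟨hx.2 ▸ Nat.dvd_lcm_right d e, this⟩⟩
    rw [Finset.card_product] at h2
    have h3 := card_div_sqf r (hR r hr)
    have h4 : r.divisors.card * r.divisors.card ≤ 4 ^ r.primeFactors.card := by
      calc _ ≤ 2 ^ r.primeFactors.card * 2 ^ r.primeFactors.card := Nat.mul_le_mul h3 h3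
        _ = 4 ^ r.primeFactors.card := by rw [← mul_pow]; norm_num
    exact_mod_cast h2.trans h4
  · rintro ⟨d, e⟩ hx
    rw [Finset.mem_product] at hx
    exact hD d hx.1 e hx.2

lemma tot_sqf (r : ℕ) (hr : Squarefree r) : (r.totient : ℝ) = ∏ p ∈ r.primeFactors, ((p:ℝ) - 1) := by
  rw [tot_real]
  conv_lhs => lhs; rw [← Nat.prod_primeFactors_of_squarefree hr]
  push_cast
  rw [← Finset.prod_mul_distrib]
  apply Finset.prod_congr rfl
  intro p hp
  have : (p:ℝ) ≠ 0 := by exact_mod_cast (Nat.prime_of_mem_primeFactors hp).ne_zero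
  field_simp

lemma le_tot_sqf (r : ℕ) (hr : Squarefree r) : (r : ℝ) ≤ 2 ^ r.primeFactors.card * r.totient := by
  rw [tot_sqf r hr, ← Finset.prod_const, ← Finset.prod_mul_distrib]
  conv_lhs => rw [← Nat.prod_primeFactors_of_squarefree hr]
  push_cast
  apply Finset.prod_le_prod
  · intros; positivity
  · intro p hp
    have : (2:ℝ) ≤ p := by exact_mod_cast (Nat.prime_of_mem_primeFactors hp).two_le
    linarith

lemma tot_q (A W r : ℕ) (hodd : Nat.Coprime 4 (A * (W * r))) (hr : Nat.Coprime (A * W) r) :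
    (4 * (A * (W * r))).totient = 2 * ((A * W).totient * r.totient) := by
  rw [Nat.totient_mul hodd, ← mul_assoc A, Nat.totient_mul hr]
  rfl

lemma sieve_expand (D : Finset ℕ) (lam : ℕ → ℝ) (N : ℤ) (hN : N ≠ 0)
    (hD : ∀ d, d ∉ D → lam d = 0) :
    (∑ d ∈ N.natAbs.divisors, lam d) ^ 2 = ∑ d ∈ D, ∑ e ∈ D, lam d * lam e *
      (if ((Nat.lcm d e : ℕ):ℤ) ∣ N then 1 else 0) := by
  have h1 : ∑ d ∈ N.natAbs.divisors, lam d = ∑ d ∈ D, (if ((d:ℕ):ℤ) ∣ N then lam d else 0) := by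
    rw [← Finset.sum_filter]
    apply Finset.sum_congr_of_eq_on_inter
    · intro d hd hd'
      by_contra hne
      apply hd'
      rw [Finset.mem_filter]
      refine ⟨?_, Int.natCast_dvd.2 (Nat.dvd_of_mem_divisors hd)⟩
      by_contra h; exact hne (hD d h)
    · intro d hd hd'
      rw [Finset.mem_filter] at hd
      exfalso; apply hd'
      rw [Nat.mem_divisors]
      exact ⟨Int.natCast_dvd.1 hd.2, Int.natAbs_ne_zero.2 hN⟩
    · intros; rfl
  rw [h1, sq, Finset.sum_mul_sum]
  apply Finset.sum_congr rfl
  intro d _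
  apply Finset.sum_congr rfl
  intro e _
  have : ((Nat.lcm d e : ℕ):ℤ) ∣ N ↔ (d:ℤ) ∣ N ∧ (e:ℤ) ∣ N := by
    rw [Int.natCast_dvd, Int.natCast_dvd, Int.natCast_dvd, Nat.lcm_dvd_iff]
  by_cases h1 : (d:ℤ) ∣ N <;> by_cases h2 : (e:ℤ) ∣ N <;> simp [this, h1, h2]

lemma core_m (X x : ℝ) (A W k N : ℕ) (B v0 : ℤ) (m : ℕ) (F : ℤ → ℤ) (D R : Finset ℕ)
    (lam : ℕ → ℝ) (Lam S T : ℝ) (nu : ℕ → ℕ) (hX : 0 < X)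
    (hF : CP F) (hm0 : 0 < m) (hA : 0 < A) (hB0 : 0 < B) (hW : 0 < W)
    (hm1 : InP1 m) (hmA : Nat.Coprime m A) (hW3 : InP3 W) (hAodd : Nat.Coprime 2 A)
    (hB : IsCoprime B (A:ℤ)) (hv : IsCoprime (A * v0 + B) (W:ℤ))
    (hF0 : ∀ n : ℤ, X < n → F n ≠ 0)
    (hlam0 : ∀ d, d ∉ D → lam d = 0) (hlam : ∀ d, |lam d| ≤ Lam)
    (hD : ∀ d ∈ D, ∀ e ∈ D, Nat.lcm d e ∈ R)
    (hD0 : ∀ d ∈ D, d ≠ 0)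
    (hR : ∀ r ∈ R, 0 < r ∧ r ≤ N ∧ Squarefree r)
    (hR3 : ∀ r ∈ R, InP3 r) (hRA : ∀ r ∈ R, Nat.Coprime (A * W) r)
    (hnu : ∀ r ∈ R, ∀ p ∈ r.primeFactors, (TS F (fun t => A * t + B) p).card + 1 = nu p ∧ nu p ≤ k)
    (hx1 : 1 ≤ x) (hx : (A * (2 * X) + B) / m ≤ x)
    (hq : ∀ r ∈ R, ((4 * (A * (W * r)) : ℕ) : ℝ) ≤ x) (hT : 0 < T)
    (hS : ∑ r ∈ R, Eerr x (4 * (A * (W * r))) ≤ S) :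
    ((pI ((A * X + B) / m) ((A * (2 * X) + B) / m)).card : ℝ) / (2 * (A * W).totient) *
      (∑ d ∈ D, ∑ e ∈ D, lam d * lam e * ∏ p ∈ (d * e).primeFactors, ((nu p : ℝ) - 1) / ((p:ℝ) - 1))
      - 2 * Lam ^ 2 * (T * S + 2 * x / T * Hn N ^ (2 * (4 * k) ^ 2)) ≤
    ∑ n ∈ NS X A W B v0 m, (∑ d ∈ (F n).natAbs.divisors, lam d) ^ 2 := by
  classical
  set P := ((pI ((A * X + B) / m) ((A * (2 * X) + B) / m)).card : ℝ) with hP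
  have hP3odd : ∀ n : ℕ, InP3 n → Nat.Coprime 2 n := by
    intro n hn
    rw [Nat.Prime.coprime_iff_not_dvd Nat.prime_two]
    intro h
    have := hn 2 Nat.prime_two h
    omega
  have hodd : ∀ r ∈ R, Nat.Coprime 4 (A * (W * r)) := by
    intro r hr
    have : Nat.Coprime (2 ^ 2) (A * (W * r)) := Nat.Coprime.pow_left 2
      (hAodd.mul_right ((hP3odd W hW3).mul_right (hP3odd r (hR3 r hr))))
    exact this
  have hm : ∀ r ∈ R, Nat.Coprime m (A * (W * r)) := by
    intro r hr
    exact hmA.mul_right ((P1_cop_P3 m W hm1 hW3).mul_right (P1_cop_P3 m r hm1 (hR3 r hr)))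
  -- expansion
  have h1 : ∑ n ∈ NS X A W B v0 m, (∑ d ∈ (F n).natAbs.divisors, lam d) ^ 2 =
      ∑ d ∈ D, ∑ e ∈ D, lam d * lam e *
        (((NS X A W B v0 m).filter (fun n => ((Nat.lcm d e : ℕ):ℤ) ∣ F n)).card : ℝ) := by
    rw [Finset.sum_congr rfl (fun n hn => sieve_expand D lam (F n) (hF0 n ((mem_NS _ _ _ _ _ _ _).1 hn).1.1) hlam0)]
    rw [Finset.sum_comm]
    apply Finset.sum_congr rfl
    intro d _
    rw [Finset.sum_comm]
    apply Finset.sum_congr rfl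
    intro e _
    rw [← Finset.mul_sum, Finset.sum_boole]
  have hTS : ∀ r ∈ R, ((TS F (fun t => A * t + B) r).card : ℝ) = ∏ p ∈ r.primeFactors, ((nu p : ℝ) - 1) := by
    intro r hr
    rw [TS_sqf F _ hF (CP_lin A B) r (hR r hr).2.2]
    push_cast
    apply Finset.prod_congr rfl
    intro p hp
    rw [← (hnu r hr p hp).1]; push_cast; ring
  have hTSk : ∀ r ∈ R, ((TS F (fun t => A * t + B) r).card : ℝ) ≤ (k:ℝ) ^ r.primeFactors.card := by
    intro r hr
    rw [TS_sqf F _ hF (CP_lin A B) r (hR r hr).2.2, ← Finset.prod_const]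
    push_cast
    apply Finset.prod_le_prod
    · intros; positivity
    · intro p hp
      have := hnu r hr p hp
      exact_mod_cast (by omega : (TS F (fun t => A * t + B) p).card ≤ k)
  have hterm : ∀ d ∈ D, ∀ e ∈ D,
      lam d * lam e * (P / (2 * (A * W).totient) * ∏ p ∈ (d * e).primeFactors, ((nu p : ℝ) - 1) / ((p:ℝ) - 1))
       - 2 * Lam ^ 2 * ((k:ℝ) ^ (Nat.lcm d e).primeFactors.card * Eerr x (4 * (A * (W * (Nat.lcm d e))))) ≤
      lam d * lam e *
        (((NS X A W B v0 m).filter (fun n => ((Nat.lcm d e : ℕ):ℤ) ∣ F n)).card : ℝ) := by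
    intro d hd e he
    have hr := hD d hd e he
    have hpf := primeFactors_lcm' d e (hD0 d hd) (hD0 e he)
    set r := Nat.lcm d e with hrdef
    have hc := NS_count X x A W B v0 m r F hX hF hm0 hA hB0 hW (hR r hr).1 (hR3 r hr) hm1 (hodd r hr)
      (hm r hr) (Nat.Coprime.coprime_mul_left (hRA r hr)) hB hv hx1 hx (hq r hr)
    have e1 : ((TS F (fun t => A * t + B) r).card : ℝ) * P / Nat.totient (4 * (A * (W * r))) =
        P / (2 * (A * W).totient) * ∏ p ∈ (d * e).primeFactors, ((nu p : ℝ) - 1) / ((p:ℝ) - 1) := by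
      rw [hTS r hr, tot_q A W r (hodd r hr) (hRA r hr), ← hpf, Finset.prod_div_distrib]
      push_cast
      rw [tot_sqf r (hR r hr).2.2, div_mul_div_comm]
      congr 1
      · ring
      · ring
    rw [← hP, e1] at hc
    set Y := P / (2 * (A * W).totient) * ∏ p ∈ (d * e).primeFactors, ((nu p : ℝ) - 1) / ((p:ℝ) - 1)
    set Z := (((NS X A W B v0 m).filter (fun n => (r:ℤ) ∣ F n)).card : ℝ)
    have hLam0 : 0 ≤ Lam := (abs_nonneg _).trans (hlam 0)
    have h2 : |lam d * lam e| ≤ Lam ^ 2 := by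
      rw [abs_mul, sq]
      exact mul_le_mul (hlam d) (hlam e) (abs_nonneg _) hLam0
    have h3 : |lam d * lam e * (Z - Y)| ≤ Lam ^ 2 * (2 * (k:ℝ) ^ r.primeFactors.card * Eerr x (4 * (A * (W * r)))) := by
      rw [abs_mul]
      apply mul_le_mul h2 _ (abs_nonneg _) (by positivity)
      refine hc.trans ?_
      apply mul_le_mul_of_nonneg_right _ (Eerr_nonneg _ _)
      linarith [hTSk r hr]
    have h4 := neg_le_of_abs_le h3
    have h5 : lam d * lam e * (Z - Y) = lam d * lam e * Z - lam d * lam e * Y := by ring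
    linarith
  rw [h1]
  have h2 := Finset.sum_le_sum (fun d hd => Finset.sum_le_sum (hterm d hd))
  refine le_trans ?_ h2
  have h3 : ∑ d ∈ D, ∑ e ∈ D, ((k:ℝ) ^ (Nat.lcm d e).primeFactors.card * Eerr x (4 * (A * (W * (Nat.lcm d e))))) ≤
      T * S + 2 * x / T * Hn N ^ (2 * (4 * k) ^ 2) := by
    refine (pair_sum D R (fun r => (k:ℝ) ^ r.primeFactors.card * Eerr x (4 * (A * (W * r)))) hD
      (fun r hr => (hR r hr).2.2) (fun r hr => mul_nonneg (by positivity) (Eerr_nonneg _ _))).trans ?_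
    have := err_abs R N (4 * k) hR (fun r => Eerr x (4 * (A * (W * r)))) S (2 * x) T hT
      (fun r _ => Eerr_nonneg _ _) (by linarith) hS ?_
    · refine le_trans (le_of_eq ?_) this
      apply Finset.sum_congr rfl
      intro r _
      push_cast
      rw [mul_pow]; ring
    · intro r hr
      have hr0 : 0 < r := (hR r hr).1
      refine (Eerr_le x hx1 _ (Nat.succ_le_of_lt (by positivity)) (hq r hr)).trans ?_
      have hr0' : (0:ℝ) < r := by exact_mod_cast hr0
      have ht : (0:ℝ) < (4 * (A * (W * r))).totient := by
        exact_mod_cast Nat.totient_pos.2 (by positivity)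
      have ht2 : (r.totient : ℝ) ≤ (4 * (A * (W * r))).totient := by
        have hd : r ∣ 4 * (A * (W * r)) := ⟨4 * (A * W), by ring⟩
        exact_mod_cast Nat.le_of_dvd (Nat.totient_pos.2 (by positivity)) (Nat.totient_dvd_of_dvd hd)
      rw [div_le_div_iff₀ ht hr0']
      have h6 := le_tot_sqf r (hR r hr).2.2
      have h7 : (r:ℝ) ≤ 2 ^ r.primeFactors.card * (4 * (A * (W * r))).totient :=
        h6.trans (mul_le_mul_of_nonneg_left ht2 (by positivity))
      have := mul_le_mul_of_nonneg_left h7 (by linarith : 0 ≤ 2 * x)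
      linarith
  have h4 := mul_le_mul_of_nonneg_left h3 (by positivity : 0 ≤ 2 * Lam ^ 2)
  have h5 : ∑ d ∈ D, ∑ e ∈ D, (lam d * lam e * (P / (2 * (A * W).totient) * ∏ p ∈ (d * e).primeFactors, ((nu p : ℝ) - 1) / ((p:ℝ) - 1))
       - 2 * Lam ^ 2 * ((k:ℝ) ^ (Nat.lcm d e).primeFactors.card * Eerr x (4 * (A * (W * (Nat.lcm d e)))))) =
      P / (2 * (A * W).totient) * (∑ d ∈ D, ∑ e ∈ D, lam d * lam e * ∏ p ∈ (d * e).primeFactors, ((nu p : ℝ) - 1) / ((p:ℝ) - 1))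
      - 2 * Lam ^ 2 * (∑ d ∈ D, ∑ e ∈ D, ((k:ℝ) ^ (Nat.lcm d e).primeFactors.card * Eerr x (4 * (A * (W * (Nat.lcm d e)))))) := by
    rw [Finset.mul_sum, Finset.mul_sum, ← Finset.sum_sub_distrib]
    apply Finset.sum_congr rfl
    intro d _
    rw [Finset.mul_sum, Finset.mul_sum, ← Finset.sum_sub_distrib]
    apply Finset.sum_congr rfl
    intro e _
    ring
  rw [h5]
  linarith

lemma InP1_mul (a b : ℕ) (ha : InP1 a) (hb : InP1 b) : InP1 (a * b) := by
  intro p hp h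
  rcases (Nat.Prime.dvd_mul hp).1 h with h | h
  · exact ha p hp h
  · exact hb p hp h

lemma P1_sum_sq (n : ℕ) (hn : 0 < n) (h : InP1 n) : IsSumTwoSquaresZ (n:ℤ) := by
  refine ⟨by exact_mod_cast hn, ?_⟩
  obtain ⟨x, y, hxy⟩ := (Nat.eq_sq_add_sq_iff (n := n)).2 (by
    intro q hq h3
    have := h q (Nat.prime_of_mem_primeFactors hq) (Nat.dvd_of_mem_primeFactors hq)
    omega)
  exact ⟨x, y, by exact_mod_cast hxy⟩

open Classical in
lemma sum_NS_le (X : ℝ) (A W g M : ℕ) (a b B v0 : ℤ) (w : ℤ → ℝ) (hX : 0 < X)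
    (hA : 0 < A) (hB0 : 0 < B) (hg : 0 < g) (hg1 : InP1 g) (ha : a = g * A) (hb : b = g * B)
    (hM : (M:ℝ) * M ≤ X) (hw : ∀ n, 0 ≤ w n) :
    ∑ m ∈ (Finset.Ioc 0 M).filter (fun m => InP1 m ∧ Nat.Coprime m A), ∑ n ∈ NS X A W B v0 m, w n ≤
    ∑ n ∈ (Finset.Icc (⌊X⌋ + 1) ⌊2 * X⌋).filter (fun n => n % (W : ℤ) = v0 % (W : ℤ)),
      (if IsSumTwoSquaresZ (a * n + b) then w n else 0) := by
  rw [← Finset.sum_biUnion]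
  · rw [← Finset.sum_filter]
    apply Finset.sum_le_sum_of_subset_of_nonneg
    · intro n hn
      rw [Finset.mem_biUnion] at hn
      obtain ⟨m, hm, hn⟩ := hn
      simp only [Finset.mem_filter, Finset.mem_Ioc] at hm
      have hn' := hn
      rw [mem_NS] at hn
      obtain ⟨_, h2, p, hp, hp4, h3⟩ := hn
      simp only [NS, Finset.mem_filter] at hn'
      simp only [Finset.mem_filter]
      refine ⟨⟨hn'.1, h2⟩, ?_⟩
      have e : a * n + b = ((g * (m * p) : ℕ) : ℤ) := by
        push_cast
        rw [h3, ha, hb]; ring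
      rw [e]
      apply P1_sum_sq
      · have := hm.1.1
        have := hp.pos
        positivity
      · exact InP1_mul _ _ hg1 (InP1_mul _ _ hm.2.1 (InP1_prime p hp hp4))
    · intro n _ _; exact hw n
  · intro m hm m' hm' hne
    simp only [Finset.coe_filter, Finset.mem_Ioc, Set.mem_ofPred_eq] at hm hm'
    change Disjoint (NS X A W B v0 m) (NS X A W B v0 m')
    rw [Finset.disjoint_left]
    intro n hn hn'
    rw [mem_NS] at hn hn'
    obtain ⟨⟨h1, _⟩, _, p, hp, _, h3⟩ := hn
    obtain ⟨_, _, p', hp', _, h3'⟩ := hn'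
    apply hne
    have hmp : m * p = m' * p' := by exact_mod_cast h3.trans h3'.symm
    have hpM : M < p := by
      by_contra hle
      push Not at hle
      have h4 : (m:ℝ) * p = A * n + B := by exact_mod_cast h3
      have h5 : (m:ℝ) * p ≤ M * M := by
        have : m * p ≤ M * M := Nat.mul_le_mul hm.1.2 hle
        exact_mod_cast this
      have h6 : (1:ℝ) ≤ A := by exact_mod_cast hA
      have h7 : (0:ℝ) < B := by exact_mod_cast hB0
      nlinarith
    have hd : p ∣ m' * p' := ⟨m, by rw [← hmp]; ring⟩
    rcases (Nat.Prime.dvd_mul hp).1 hd with h | h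
    · have := Nat.le_of_dvd hm'.1.1 h
      omega
    · have := (Nat.prime_dvd_prime_iff_eq hp hp').1 h
      subst this
      exact Nat.eq_of_mul_eq_mul_right hp.pos hmp

open Filter in
lemma ev_log (ε : ℝ) (hε : 0 < ε) : ∀ᶠ L : ℝ in atTop, L ^ ((2:ℝ)/5) * Real.log (1 + L) ≤ ε * Real.sqrt L := by
  have h1 := (isLittleO_log_rpow_atTop (by norm_num : (0:ℝ) < 1/10)).bound (by positivity : 0 < ε / 2)
  filter_upwards [h1, eventually_ge_atTop (2:ℝ)] with L h1 hL
  have hL0 : 0 < L := by linarith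
  rw [Real.norm_of_nonneg (Real.log_nonneg (by linarith)), Real.norm_of_nonneg (by positivity)] at h1
  have h2 : Real.log (1 + L) ≤ 2 * Real.log L := by
    have : 2 * Real.log L = Real.log (L ^ 2) := by rw [Real.log_pow]; norm_num
    rw [this]
    apply Real.log_le_log (by linarith); nlinarith
  have h3 : L ^ ((2:ℝ)/5) * L ^ ((1:ℝ)/10) = Real.sqrt L := by
    rw [← Real.rpow_add hL0, Real.sqrt_eq_rpow]; norm_num
  calc L ^ ((2:ℝ)/5) * Real.log (1 + L) ≤ L ^ ((2:ℝ)/5) * (ε * L ^ ((1:ℝ)/10)) := by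
        apply mul_le_mul_of_nonneg_left _ (by positivity); linarith
    _ = ε * Real.sqrt L := by rw [← h3]; ring

open Filter in
lemma ev_pow (ε K s : ℝ) (hε : 0 < ε) (hs : s < 1) : ∀ᶠ L : ℝ in atTop, K * L ^ s ≤ ε * L := by
  have h1 := (tendsto_rpow_atTop (by linarith : 0 < 1 - s)).eventually (eventually_ge_atTop (K / ε))
  filter_upwards [h1, eventually_ge_atTop (2:ℝ)] with L h1 hL
  have h2 : L ^ (1 - s) * L ^ s = L := by
    rw [← Real.rpow_add (by linarith)]; simp
  have h3 : 0 ≤ L ^ s := by positivity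
  have h4 : K ≤ ε * L ^ (1 - s) := by
    rw [div_le_iff₀ hε] at h1; linarith
  calc K * L ^ s ≤ ε * L ^ (1 - s) * L ^ s := mul_le_mul_of_nonneg_right h4 h3
    _ = ε * L := by rw [mul_assoc, h2]

open Filter in
lemma ev_all (c0 Z0 : ℝ) (hc0 : 0 < c0) : ∃ X0 : ℝ, ∀ X : ℝ, X0 ≤ X → 1 < X ∧ 100 ≤ Real.log X ∧
    37 * (Real.log X ^ ((2:ℝ)/5) * Real.log (1 + Real.log X)) ≤ 3/20 * c0 * Real.sqrt (Real.log X) ∧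
    4 * Real.log X ^ ((1:ℝ)/3) * (4:ℝ) ^ (2 * Real.log X ^ ((1:ℝ)/3)) * X ^ ((1:ℝ)/5) <
      (X ^ ((9:ℝ)/10)) ^ ((2:ℝ)/5) ∧
    Z0 ≤ X ^ ((9:ℝ)/10) ∧ 3 * Real.log X ^ ((1:ℝ)/3) ≤ X ∧ 2 < Real.log (Real.log X) / 2 := by
  have hlog := Real.tendsto_log_atTop
  have h1 := hlog.eventually (ev_log (3/20 * c0 / 37) (by positivity))
  have h2 := hlog.eventually (ev_pow (1/100) (2 * Real.log 4) (1/3) (by norm_num) (by norm_num))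
  have h3 := hlog.eventually (ev_pow 1 (4:ℝ) (1/3) (by norm_num) (by norm_num))
  have h3' := hlog.eventually (eventually_ge_atTop (100:ℝ))
  have h4 := (tendsto_rpow_atTop (by norm_num : (0:ℝ) < 9/10)).eventually (eventually_ge_atTop Z0)
  have h5 := (hlog.comp hlog).eventually (eventually_gt_atTop (4:ℝ))
  have h6 := hlog.eventually (Real.isLittleO_log_id_atTop.bound (by norm_num : (0:ℝ) < 1/100))
  obtain ⟨X0, hX0⟩ := eventually_atTop.1 (h1.and (h2.and (h3.and (h3'.and (h4.and (h5.and
    (h6.and (eventually_gt_atTop (1:ℝ)))))))))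
  refine ⟨X0, fun X hX => ?_⟩
  obtain ⟨h1, h2, h3, h3', h4, h5, h6, h7⟩ := hX0 X hX
  have hX0 : 0 < X := by linarith
  set L := Real.log X with hL
  have hXL : X = Real.exp L := by rw [hL, Real.exp_log hX0]
  have hLX : L ≤ X := by
    have := Real.log_le_sub_one_of_pos hX0
    linarith
  refine ⟨h7, h3', by linarith, ?_, h4, ?_, ?_⟩
  · simp only [id] at h6
    rw [Real.norm_of_nonneg (Real.log_nonneg (by linarith)), Real.norm_of_nonneg (by linarith)] at h6
    have e1 : 4 * L ^ ((1:ℝ)/3) ≤ Real.exp (1/100 * L + Real.log 4) := by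
      rw [Real.exp_add, Real.exp_log (by norm_num)]
      have : L ^ ((1:ℝ)/3) ≤ Real.exp (1/100 * L) := by
        calc L ^ ((1:ℝ)/3) ≤ L ^ (1:ℝ) := Real.rpow_le_rpow_of_exponent_le (by linarith) (by norm_num)
          _ = Real.exp (Real.log L) := by rw [Real.rpow_one, Real.exp_log (by linarith)]
          _ ≤ _ := Real.exp_le_exp.2 h6
      linarith
    have e2 : (4:ℝ) ^ (2 * L ^ ((1:ℝ)/3)) ≤ Real.exp (1/100 * L) := by
      rw [Real.rpow_def_of_pos (by norm_num)]
      apply Real.exp_le_exp.2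
      linarith
    have e3 : X ^ ((1:ℝ)/5) = Real.exp (L / 5) := by
      rw [Real.rpow_def_of_pos hX0]; congr 1; ring
    have e4 : (X ^ ((9:ℝ)/10)) ^ ((2:ℝ)/5) = Real.exp (9/25 * L) := by
      rw [← Real.rpow_mul hX0.le, Real.rpow_def_of_pos hX0]; congr 1; ring
    rw [e3, e4]
    have hl4 : Real.log 4 ≤ 2 := by
      have := Real.log_le_sub_one_of_pos (by norm_num : (0:ℝ) < 2)
      have e : Real.log 4 = 2 * Real.log 2 := by
        rw [show (4:ℝ) = 2 ^ 2 by norm_num, Real.log_pow]; norm_num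
      linarith
    calc _ ≤ Real.exp (1/100 * L + Real.log 4) * Real.exp (1/100 * L) * Real.exp (L/5) := by
          gcongr
      _ = Real.exp ((1/100 * L + Real.log 4) + (1/100 * L) + L/5) := by
          rw [Real.exp_add (1/100 * L + Real.log 4 + 1/100 * L), Real.exp_add (1/100 * L + Real.log 4)]
      _ < _ := by apply Real.exp_lt_exp.2; linarith
  · have : 0 ≤ L ^ ((1:ℝ)/3) := by positivity
    linarith
  · simp only [Function.comp] at h5
    linarith

/-- numeric error bound -/
lemma err_num (c0 L : ℝ) (k : ℕ) (hc0 : 0 < c0) (hL : 100 ≤ L) (hk : 0 < k) (hkL : (k:ℝ) ≤ L ^ ((1:ℝ)/5))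
    (h : 37 * (L ^ ((2:ℝ)/5) * Real.log (1 + L)) ≤ 3/20 * c0 * Real.sqrt L) :
    (k:ℝ) * ((1 + L) * (2 * L ^ k * (3 * L ^ ((1:ℝ)/3) * (Real.exp (c0/2 * Real.sqrt L) * Real.exp (-c0 * (9/10 * Real.sqrt L)) +
      2 / Real.exp (c0/2 * Real.sqrt L) * (1 + L) ^ (2 * (4 * k) ^ 2))))) ≤ Real.exp (-(c0/4) * Real.sqrt L) := by
  set s := Real.sqrt L with hs
  have hs0 : 0 ≤ s := Real.sqrt_nonneg L
  set Y := 1 + L with hY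
  have hY1 : 1 ≤ Y := by linarith
  have hk1 : 1 ≤ k := hk
  have hkL' : (k:ℝ) ≤ Y := by
    refine hkL.trans ?_
    calc L ^ ((1:ℝ)/5) ≤ L ^ (1:ℝ) := Real.rpow_le_rpow_of_exponent_le (by linarith) (by norm_num)
      _ ≤ Y := by rw [Real.rpow_one]; linarith
  have hL3 : L ^ ((1:ℝ)/3) ≤ Y := by
    calc L ^ ((1:ℝ)/3) ≤ L ^ (1:ℝ) := Real.rpow_le_rpow_of_exponent_le (by linarith) (by norm_num)
      _ ≤ Y := by rw [Real.rpow_one]; linarith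
  have hLk : L ^ k ≤ Y ^ k := pow_le_pow_left₀ (by linarith) (by linarith) k
  have e1 : Real.exp (c0/2 * s) * Real.exp (-c0 * (9/10 * s)) = Real.exp (-(2/5) * c0 * s) := by
    rw [← Real.exp_add]; congr 1; ring
  have e2 : 2 / Real.exp (c0/2 * s) ≤ 2 * Real.exp (-(2/5) * c0 * s) := by
    rw [div_eq_mul_inv, ← Real.exp_neg]
    have : Real.exp (-(c0/2 * s)) ≤ Real.exp (-(2/5) * c0 * s) := by
      apply Real.exp_le_exp.2
      nlinarith [mul_nonneg hc0.le hs0]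
    linarith
  set E := Real.exp (-(2/5) * c0 * s) with hE
  have hE0 : 0 < E := Real.exp_pos _
  set j := 2 * (4 * k) ^ 2 with hj
  have hYj : 1 ≤ Y ^ j := one_le_pow₀ hY1
  have e3 : Real.exp (c0/2 * s) * Real.exp (-c0 * (9/10 * s)) + 2 / Real.exp (c0/2 * s) * Y ^ j ≤ 3 * E * Y ^ j := by
    rw [e1]
    have a1 := mul_le_mul_of_nonneg_right e2 (by positivity : 0 ≤ Y ^ j)
    have a2 := mul_le_mul_of_nonneg_left hYj hE0.le
    linarith
  have e4 : (k:ℝ) * (Y * (2 * L ^ k * (3 * L ^ ((1:ℝ)/3) * (Real.exp (c0/2 * s) * Real.exp (-c0 * (9/10 * s)) +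
      2 / Real.exp (c0/2 * s) * Y ^ j)))) ≤ Y * (Y * (2 * Y ^ k * (3 * Y * (3 * E * Y ^ j)))) := by
    have : 0 ≤ L ^ ((1:ℝ)/3) := by positivity
    gcongr
  refine e4.trans ?_
  have e5 : Y * (Y * (2 * Y ^ k * (3 * Y * (3 * E * Y ^ j)))) = 18 * (Y ^ (3 + k + j) * E) := by
    rw [pow_add, pow_add]; ring
  rw [e5]
  have e6 : 18 * (Y ^ (3 + k + j) * E) ≤ Y ^ (37 * k ^ 2) * E := by
    have : (18:ℝ) * Y ^ (3 + k + j) ≤ Y ^ (37 * k ^ 2) := by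
      calc (18:ℝ) * Y ^ (3 + k + j) ≤ Y * Y ^ (3 + k + j) := by gcongr; linarith
        _ = Y ^ (4 + k + j) := by rw [← pow_succ']; congr 1; omega
        _ ≤ _ := by
          apply pow_le_pow_right₀ hY1
          rw [hj]; nlinarith
    nlinarith
  refine e6.trans ?_
  have e7 : Y ^ (37 * k ^ 2) ≤ Real.exp (3/20 * c0 * s) := by
    rw [← Real.exp_log (by positivity : 0 < Y ^ (37 * k ^ 2)), Real.log_pow]
    apply Real.exp_le_exp.2
    refine le_trans ?_ h
    push_cast
    have hk2 : (k:ℝ) ^ 2 ≤ L ^ ((2:ℝ)/5) := by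
      have : L ^ ((2:ℝ)/5) = (L ^ ((1:ℝ)/5)) ^ 2 := by
        rw [← Real.rpow_natCast, ← Real.rpow_mul (by linarith)]; norm_num
      rw [this]
      exact pow_le_pow_left₀ (by positivity) hkL 2
    have := mul_le_mul_of_nonneg_right hk2 (Real.log_nonneg hY1)
    linarith
  calc _ ≤ Real.exp (3/20 * c0 * s) * E := mul_le_mul_of_nonneg_right e7 hE0.le
    _ = _ := by rw [hE, ← Real.exp_add]; congr 1; ring

lemma gcd_decomp (a b : ℤ) (ha : 0 < a) (hb : 0 < b) : ∃ (g A : ℕ) (B : ℤ), 0 < g ∧ 0 < A ∧ 0 < B ∧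
    a = g * A ∧ b = g * B ∧ IsCoprime B (A:ℤ) := by
  have hg : 0 < Int.gcd a b := Int.gcd_pos_of_ne_zero_left b ha.ne'
  have hg' : (0:ℤ) < (Int.gcd a b : ℤ) := by exact_mod_cast hg
  obtain ⟨A, hA⟩ := Int.gcd_dvd_left (a := a) (b := b)
  obtain ⟨B, hB⟩ := Int.gcd_dvd_right (a := a) (b := b)
  set g := Int.gcd a b with hgdef
  have hA0 : 0 < A := by
    rw [hA] at ha
    exact pos_of_mul_pos_right ha hg'.le
  have hB0 : 0 < B := by
    rw [hB] at hb
    exact pos_of_mul_pos_right hb hg'.le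
  have hAn : (A.toNat : ℤ) = A := Int.toNat_of_nonneg hA0.le
  refine ⟨g, A.toNat, B, hg, by omega, hB0, by rw [hAn]; exact hA, hB, ?_⟩
  rw [hAn]
  have h := Int.gcd_eq_gcd_ab a b
  rw [← hgdef] at h
  refine ⟨Int.gcdB a b, Int.gcdA a b, ?_⟩
  have h2 : (g:ℤ) * (Int.gcdB a b * B + Int.gcdA a b * A) = g * 1 := by
    calc (g:ℤ) * (Int.gcdB a b * B + Int.gcdA a b * A) = (g * A) * Int.gcdA a b + (g * B) * Int.gcdB a b := by ring
      _ = a * Int.gcdA a b + b * Int.gcdB a b := by rw [← hA, ← hB]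
      _ = g * 1 := by rw [← h]; ring
  exact mul_left_cancel₀ hg'.ne' h2

lemma W_facts (y : ℝ) (hy : 0 ≤ y) (p0 W : ℕ) (hp0 : p0.Prime)
    (hW : W = ∏ p ∈ (Finset.range (⌊y⌋₊ + 1)).filter
          (fun p : ℕ => p.Prime ∧ (p : ℝ) ≤ y ∧ p % 4 = 3 ∧ p ≠ p0), p) :
    0 < W ∧ InP3 W ∧ Nat.Coprime W p0 ∧ (W:ℝ) ≤ (4:ℝ) ^ y ∧
    ∀ p : ℕ, p.Prime → p % 4 = 3 → p ≠ p0 → ¬ p ∣ W → y < p := by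
  have hpr : ∀ p ∈ (Finset.range (⌊y⌋₊ + 1)).filter
          (fun p : ℕ => p.Prime ∧ (p : ℝ) ≤ y ∧ p % 4 = 3 ∧ p ≠ p0), p.Prime := by
    intro p hp; exact (Finset.mem_filter.1 hp).2.1
  have hdiv : ∀ q : ℕ, q.Prime → q ∣ W → q % 4 = 3 ∧ q ≠ p0 := by
    intro q hq hd
    rw [hW] at hd
    obtain ⟨p, hp, hqp⟩ := (Prime.dvd_finsetProd_iff hq.prime _).1 hd
    rw [(Nat.prime_dvd_prime_iff_eq hq (hpr p hp)).1 hqp]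
    exact (Finset.mem_filter.1 hp).2.2.2
  refine ⟨?_, fun q hq hd => (hdiv q hq hd).1, ?_, ?_, ?_⟩
  · rw [hW]; exact Finset.prod_pos (fun p hp => (hpr p hp).pos)
  · rw [Nat.coprime_comm, Nat.Prime.coprime_iff_not_dvd hp0]
    intro h; exact (hdiv p0 hp0 h).2 rfl
  · have h1 : W ≤ primorial ⌊y⌋₊ := by
      rw [hW]
      apply Finset.prod_le_prod_of_subset_of_one_le'
      · intro p hp
        have h1 := Finset.mem_filter.1 hp
        have h2 := Finset.mem_range.1 h1.1
        simp [h1.2.1]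
        omega
      · intro p hp _
        have : p.Prime := by simp at hp; exact hp.2
        exact this.one_lt.le
    have h2 : (W:ℝ) ≤ (4:ℝ) ^ (⌊y⌋₊ : ℝ) := by
      rw [Real.rpow_natCast]
      exact_mod_cast h1.trans (primorial_le_four_pow _)
    exact h2.trans (Real.rpow_le_rpow_of_exponent_le (by norm_num) (Nat.floor_le hy))
  · intro p hp h3 hne hnd
    by_contra hle
    push Not at hle
    apply hnd
    rw [hW]
    apply Finset.dvd_prod_of_mem (fun p => p)
    rw [Finset.mem_filter, Finset.mem_range]
    exact ⟨Nat.lt_succ_of_le (Nat.le_floor hle), hp, hle, h3, hne⟩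

lemma Hn_le (N : ℕ) (y : ℝ) (hy : 1 ≤ y) (hN : (N:ℝ) ≤ y) : Hn N ≤ 1 + Real.log y := by
  rw [Hn_eq]
  refine (harmonic_le_one_add_log N).trans ?_
  rcases Nat.eq_zero_or_pos N with h | h
  · subst h; simp; exact Real.log_nonneg hy
  · have : (0:ℝ) < N := by exact_mod_cast h
    have := Real.log_le_log this hN
    linarith

lemma SP1_ge (X : ℝ) (hX : 1 < X) : Real.sqrt (Real.log X) / 12 ≤ SP1 ⌊X ^ ((1:ℝ)/10)⌋₊ := by
  have h := SP1_bound ⌊X ^ ((1:ℝ)/10)⌋₊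
  have h1 : Real.log X / 10 ≤ Real.log (⌊X ^ ((1:ℝ)/10)⌋₊ + 1) := by
    have e : Real.log X / 10 = Real.log (X ^ ((1:ℝ)/10)) := by
      rw [Real.log_rpow (by linarith)]; ring
    rw [e]
    apply Real.log_le_log (by positivity)
    exact (Nat.lt_floor_add_one _).le
  have hL : 0 ≤ Real.log X := Real.log_nonneg hX.le
  have h2 : Real.sqrt (Real.log X) / 4 ≤ Real.sqrt (Real.log (⌊X ^ ((1:ℝ)/10)⌋₊ + 1)) := by
    apply Real.le_sqrt_of_sq_le
    rw [div_pow, Real.sq_sqrt hL]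
    linarith
  linarith

lemma card_pI_ge' (c Z0 : ℝ) (hc : 0 < c)
    (hch : ∀ Y Z : ℝ, Z0 ≤ Z → 0 ≤ Y → Y ≤ 2*Z → c*Z/Real.log (3*Z) ≤
      (((Finset.Ioc ⌊Y⌋₊ ⌊Y+Z⌋₊).filter Nat.Prime).card : ℝ))
    (X A B m : ℝ) (hX : 1 < X) (hA : 1 ≤ A) (hB : 0 < B) (hBX : B ≤ X) (hm : 1 ≤ m)
    (hZ0 : Z0 ≤ X / m) (hm3 : 1 < X / m) (hA3 : 3 * A ≤ X) :
    c * A * X / (2 * Real.log X) * (1 / m) ≤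
      (((Finset.Ioc ⌊(A * X + B) / m⌋₊ ⌊(A * (2 * X) + B) / m⌋₊).filter Nat.Prime).card : ℝ) := by
  have hm0 : 0 < m := by linarith
  have hXm : X / m ≤ A * X / m := by
    apply div_le_div_of_nonneg_right _ hm0.le; nlinarith
  have h := hch ((A * X + B) / m) (A * X / m) (hZ0.trans hXm) (by positivity) (by
    rw [mul_div_assoc', div_le_div_iff_of_pos_right hm0]
    nlinarith)
  have e : (A * X + B) / m + A * X / m = (A * (2 * X) + B) / m := by ring
  rw [e] at h
  refine le_trans ?_ h
  have hZ1 : 1 < A * X / m := by linarith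
  have hlog0 : 0 < Real.log (3 * (A * X / m)) := Real.log_pos (by linarith)
  have hlog1 : Real.log (3 * (A * X / m)) ≤ 2 * Real.log X := by
    have : 2 * Real.log X = Real.log (X ^ 2) := by rw [Real.log_pow]; norm_num
    rw [this]
    apply Real.log_le_log (by linarith)
    have : A * X / m ≤ A * X := div_le_self (by positivity) hm
    nlinarith
  calc c * A * X / (2 * Real.log X) * (1 / m) = c * (A * X / m) / (2 * Real.log X) := by field_simp
    _ ≤ _ := by
      apply div_le_div_of_nonneg_left (by positivity) hlog0 hlog1

/-- error for one `m` -/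
lemma err_m (c0 X m : ℝ) (k N : ℕ) (hc0 : 0 < c0) (hX : 1 < X) (hL : 100 ≤ Real.log X) (hm : 0 < m)
    (hmX : m ≤ X ^ ((1:ℝ)/10)) (hN : (N:ℝ) ≤ X) :
    2 * (Real.log X ^ ((k:ℝ)/2)) ^ 2 * (Real.exp (c0/2 * Real.sqrt (Real.log X)) *
      ((3 * Real.log X ^ ((1:ℝ)/3) * X / m) *
        Real.exp (-c0 * Real.sqrt (Real.log (3 * Real.log X ^ ((1:ℝ)/3) * X / m)))) +
      2 * (3 * Real.log X ^ ((1:ℝ)/3) * X / m) / Real.exp (c0/2 * Real.sqrt (Real.log X)) *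
        Hn N ^ (2 * (4 * k) ^ 2)) ≤
    X * (2 * Real.log X ^ k * (3 * Real.log X ^ ((1:ℝ)/3) *
      (Real.exp (c0/2 * Real.sqrt (Real.log X)) * Real.exp (-c0 * (9/10 * Real.sqrt (Real.log X))) +
      2 / Real.exp (c0/2 * Real.sqrt (Real.log X)) * (1 + Real.log X) ^ (2 * (4 * k) ^ 2)))) * (1 / m) := by
  have hX0 : 0 < X := by linarith
  set L := Real.log X with hLdef
  have hL3 : 1 ≤ L ^ ((1:ℝ)/3) := Real.one_le_rpow (by linarith) (by norm_num)
  have hLk : (L ^ ((k:ℝ)/2)) ^ 2 = L ^ k := by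
    rw [← Real.rpow_natCast, ← Real.rpow_mul (by linarith), ← Real.rpow_natCast]
    congr 1; push_cast; ring
  have hHn : Hn N ^ (2 * (4 * k) ^ 2) ≤ (1 + L) ^ (2 * (4 * k) ^ 2) :=
    pow_le_pow_left₀ (Hn_nonneg N) (Hn_le N X hX.le hN) _
  have hxm : X ^ ((9:ℝ)/10) ≤ 3 * L ^ ((1:ℝ)/3) * X / m := by
    rw [le_div_iff₀ hm]
    have e : X ^ ((9:ℝ)/10) * X ^ ((1:ℝ)/10) = X := by
      rw [← Real.rpow_add hX0]; norm_num
    have : X ^ ((9:ℝ)/10) * m ≤ X := by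
      calc _ ≤ X ^ ((9:ℝ)/10) * X ^ ((1:ℝ)/10) := by gcongr
        _ = X := e
    nlinarith
  set x := 3 * L ^ ((1:ℝ)/3) * X / m with hx
  have hx0 : 0 < x := by positivity
  have hlogx : 9/10 * L ≤ Real.log x := by
    have := Real.log_le_log (by positivity) hxm
    rwa [Real.log_rpow hX0] at this
  have hsq : 9/10 * Real.sqrt L ≤ Real.sqrt (Real.log x) := by
    apply Real.le_sqrt_of_sq_le
    rw [mul_pow, Real.sq_sqrt (by linarith)]
    linarith
  have hexp : Real.exp (-c0 * Real.sqrt (Real.log x)) ≤ Real.exp (-c0 * (9/10 * Real.sqrt L)) := by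
    apply Real.exp_le_exp.2
    nlinarith
  rw [hLk]
  have e : X * (2 * L ^ k * (3 * L ^ ((1:ℝ)/3) *
      (Real.exp (c0/2 * Real.sqrt L) * Real.exp (-c0 * (9/10 * Real.sqrt L)) +
      2 / Real.exp (c0/2 * Real.sqrt L) * (1 + L) ^ (2 * (4 * k) ^ 2)))) * (1 / m) =
      2 * L ^ k * (Real.exp (c0/2 * Real.sqrt L) * (x * Real.exp (-c0 * (9/10 * Real.sqrt L))) +
      2 * x / Real.exp (c0/2 * Real.sqrt L) * (1 + L) ^ (2 * (4 * k) ^ 2)) := by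
    rw [hx]; ring
  rw [e]
  gcongr

lemma sum_restrict (D T : Finset ℕ) (lam : ℕ → ℝ) (h : ℕ → ℕ → ℝ) (hsub : D ⊆ T)
    (hl : ∀ d, d ∉ D → lam d = 0) :
    ∑ d ∈ D, ∑ e ∈ D, lam d * lam e * h d e = ∑ d ∈ T, ∑ e ∈ T, lam d * lam e * h d e := by
  apply Finset.sum_subset_zero_on_sdiff hsub
  · intro d hd
    rw [hl d (Finset.mem_sdiff.1 hd).2]; simp
  · intro d _
    apply Finset.sum_subset_zero_on_sdiff hsub
    · intro e he
      rw [hl e (Finset.mem_sdiff.1 he).2]; simp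
    · intros; rfl

set_option maxHeartbeats 2000000 in
lemma core_i (c0 c Z0 : ℝ) (hc0 : 0 < c0) (hc : 0 < c)
    (hch : ∀ Y Z : ℝ, Z0 ≤ Z → 0 ≤ Y → Y ≤ 2*Z → c*Z/Real.log (3*Z) ≤
      (((Finset.Ioc ⌊Y⌋₊ ⌊Y+Z⌋₊).filter Nat.Prime).card : ℝ))
    (X : ℝ) (hX : 1 < X) (hL : 100 ≤ Real.log X)
    (hsize : 4 * Real.log X ^ ((1:ℝ)/3) * (4:ℝ) ^ (2 * Real.log X ^ ((1:ℝ)/3)) * X ^ ((1:ℝ)/5) <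
      (X ^ ((9:ℝ)/10)) ^ ((2:ℝ)/5))
    (hZ0 : Z0 ≤ X ^ ((9:ℝ)/10)) (h3L : 3 * Real.log X ^ ((1:ℝ)/3) ≤ X)
    (hll : 2 < Real.log (Real.log X) / 2)
    (k p0 W : ℕ) (a b : Fin k → ℤ) (ν : ℕ → ℕ) (v0 : ℤ) (lam : ℕ → ℝ)
    (hp0 : p0.Prime) (hp0l : Real.log (Real.log X) / 2 ≤ (p0 : ℝ))
    (hW : W = ∏ p ∈ (Finset.range (⌊2 * Real.log X ^ ((1 : ℝ) / 3)⌋₊ + 1)).filter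
          (fun p : ℕ => p.Prime ∧ (p : ℝ) ≤ 2 * Real.log X ^ ((1 : ℝ) / 3) ∧ p % 4 = 3 ∧ p ≠ p0), p)
    (hadm : ∀ p : ℕ, p.Prime → p % 4 = 3 → ∃ n : ℤ, Int.gcd (∏ i, (a i * n + b i)) (p : ℤ) = 1)
    (hab : ∀ i, 0 < a i ∧ (a i : ℝ) ≤ Real.log X ^ ((1 : ℝ) / 3) ∧
      Int.gcd (2 * (p0 : ℤ)) (a i) = 1 ∧ 0 < b i ∧ (b i : ℝ) < X)
    (hν : ∀ p : ℕ, p.Prime →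
      ν p = ({n : ℕ | n < p ∧ (p : ℤ) ∣ ∏ i, (a i * (n : ℤ) + b i)}).ncard)
    (hv0 : Int.gcd (∏ i, (a i * v0 + b i)) (W : ℤ) = 1)
    (hlam0 : ∀ d : ℕ, ¬(Squarefree d ∧ (d : ℝ) < X ^ ((1 : ℝ) / 10) ∧ InP3 d ∧
      Nat.Coprime d (p0 * W)) → lam d = 0)
    (hlam : ∀ d : ℕ, |lam d| ≤ Real.log X ^ ((k : ℝ) / 2))
    (hlev : ∀ x : ℝ, 2 ≤ x → x ≤ 3 * Real.log X ^ ((1 : ℝ) / 3) * X →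
      ∑ q ∈ (Finset.range (⌈x⌉₊ + 1)).filter
          (fun q : ℕ => (q : ℝ) < x ^ ((2 : ℝ) / 5) ∧ Nat.gcd q p0 = 1),
        Eerr x q ≤ x * Real.exp (-c0 * Real.sqrt (Real.log x)))
    (i : Fin k) (Q : ℝ) (hQ : Q = ∑ d ∈ Finset.range (⌊X ^ ((1 : ℝ) / 10)⌋₊ + 1),
          ∑ e ∈ Finset.range (⌊X ^ ((1 : ℝ) / 10)⌋₊ + 1),
            lam d * lam e * ∏ p ∈ (d * e).primeFactors, ((ν p : ℝ) - 1) / ((p : ℝ) - 1))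
    (hQ0 : 0 ≤ Q) (A g : ℕ) (B : ℤ) (hg : 0 < g) (hA : 0 < A) (hB0 : 0 < B)
    (hgA : a i = g * A) (hgB : b i = g * B) (hBA : IsCoprime B (A:ℤ)) (m : ℕ) (hm0 : 0 < m)
    (hmM : m ≤ ⌊X ^ ((1 : ℝ) / 10)⌋₊) (hm1 : InP1 m) (hmA : Nat.Coprime m A) :
    c * A * X / (2 * Real.log X) / (2 * (A * W).totient) * Q * (1 / m) -
    X * (2 * Real.log X ^ k * (3 * Real.log X ^ ((1:ℝ)/3) *
      (Real.exp (c0/2 * Real.sqrt (Real.log X)) * Real.exp (-c0 * (9/10 * Real.sqrt (Real.log X))) +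
      2 / Real.exp (c0/2 * Real.sqrt (Real.log X)) * (1 + Real.log X) ^ (2 * (4 * k) ^ 2)))) * (1 / m) ≤
    ∑ n ∈ NS X A W B v0 m, (∑ d ∈ (∏ i, (a i * n + b i)).natAbs.divisors, lam d) ^ 2 := by
  classical
  have hX0 : 0 < X := by linarith
  have hL3 : 1 ≤ Real.log X ^ ((1:ℝ)/3) := Real.one_le_rpow (by linarith) (by norm_num)
  obtain ⟨hW0, hW3, hWp0, hW4, hWbig⟩ := W_facts _ (by positivity) p0 W hp0 hW
  obtain ⟨ha0, haL, hap0, hb0, hbX⟩ := hab i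
  set L := Real.log X with hLdef
  set M := ⌊X ^ ((1 : ℝ) / 10)⌋₊ with hM
  set N := ⌊X ^ ((1 : ℝ) / 5)⌋₊ with hN
  have hg1 : (1:ℤ) ≤ g := by exact_mod_cast hg
  have hA1 : (1:ℝ) ≤ A := by exact_mod_cast hA
  have hAa : (A:ℤ) ≤ a i := by rw [hgA]; nlinarith
  have hBb : B ≤ b i := by rw [hgB]; nlinarith
  have hAL : (A:ℝ) ≤ L ^ ((1:ℝ)/3) := le_trans (by exact_mod_cast hAa) haL
  have hBX : (B:ℝ) ≤ X := le_trans (by exact_mod_cast hBb) hbX.le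
  have hB0' : (0:ℝ) < B := by exact_mod_cast hB0
  have hAdvd : (A:ℤ) ∣ a i := ⟨g, by rw [hgA]; ring⟩
  have hcopA : IsCoprime (2 * (p0:ℤ)) (A:ℤ) :=
    IsCoprime.of_isCoprime_of_dvd_right (Int.isCoprime_iff_gcd_eq_one.2 hap0) hAdvd
  have hAodd : Nat.Coprime 2 A := by
    have := (IsCoprime.mul_left_iff.1 hcopA).1
    exact Nat.isCoprime_iff_coprime.1 (by exact_mod_cast this)
  have hAp0 : Nat.Coprime p0 A := Nat.isCoprime_iff_coprime.1 (IsCoprime.mul_left_iff.1 hcopA).2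
  have hp0odd : Nat.Coprime 4 p0 := by
    have h2 : p0 ≠ 2 := by
      rintro rfl
      norm_num at hp0l
      linarith
    have : Nat.Coprime (2 ^ 2) p0 := Nat.Coprime.pow_left 2
      ((Nat.coprime_primes Nat.prime_two hp0).2 (Ne.symm h2))
    exact this
  have hdvdF : ∀ t : ℤ, (A:ℤ) * t + B ∣ ∏ i, (a i * t + b i) := by
    intro t
    refine Dvd.dvd.trans ?_ (Finset.dvd_prod_of_mem (fun i => a i * t + b i) (Finset.mem_univ i))
    exact ⟨g, by rw [hgA, hgB]; ring⟩
  have hv : IsCoprime ((A:ℤ) * v0 + B) (W:ℤ) :=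
    IsCoprime.of_isCoprime_of_dvd_left (Int.isCoprime_iff_gcd_eq_one.2 hv0) (hdvdF v0)
  set D := (Finset.range (M + 1)).filter (fun d : ℕ => Squarefree d ∧ (d : ℝ) < X ^ ((1 : ℝ) / 10) ∧ InP3 d ∧
      Nat.Coprime d (p0 * W)) with hD
  set R := (Finset.Ioc 0 N).filter (fun d : ℕ => Squarefree d ∧ InP3 d ∧ Nat.Coprime d (p0 * W)) with hR
  have hlamD : ∀ d, d ∉ D → lam d = 0 := by
    intro d hd
    apply hlam0
    intro h
    apply hd
    rw [hD, Finset.mem_filter, Finset.mem_range]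
    exact ⟨Nat.lt_succ_of_le (Nat.le_floor h.2.1.le), h⟩
  have hDR : ∀ d ∈ D, ∀ e ∈ D, Nat.lcm d e ∈ R := by
    intro d hd e he
    rw [hD, Finset.mem_filter] at hd he
    obtain ⟨_, d1, d2, d3, d4⟩ := hd
    obtain ⟨_, e1, e2, e3, e4⟩ := he
    rw [hR, Finset.mem_filter, Finset.mem_Ioc]
    refine ⟨⟨Nat.lcm_pos (Nat.pos_of_ne_zero d1.ne_zero) (Nat.pos_of_ne_zero e1.ne_zero), ?_⟩,
      sqf_lcm d e d1 e1, InP3_lcm d e d3 e3, cop_lcm d e _ d4 e4⟩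
    apply Nat.le_floor
    have h1 : ((Nat.lcm d e : ℕ):ℝ) ≤ (d:ℝ) * e := by
      exact_mod_cast Nat.le_of_dvd (Nat.mul_pos (Nat.pos_of_ne_zero d1.ne_zero) (Nat.pos_of_ne_zero e1.ne_zero))
        (Nat.lcm_dvd_mul d e)
    refine h1.trans ?_
    have h2 : X ^ ((1:ℝ)/5) = X ^ ((1:ℝ)/10) * X ^ ((1:ℝ)/10) := by
      rw [← Real.rpow_add hX0]; norm_num
    rw [h2]
    exact mul_le_mul d2.le e2.le (by positivity) (by positivity)
  have hRp : ∀ r ∈ R, ∀ p ∈ r.primeFactors, ∀ j, ¬ (p:ℤ) ∣ a j := by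
    intro r hr p hp j hd
    rw [hR, Finset.mem_filter] at hr
    obtain ⟨_, r1, r2, r3⟩ := hr
    have hpp := Nat.prime_of_mem_primeFactors hp
    have hpr := Nat.dvd_of_mem_primeFactors hp
    have h1 : 2 * L ^ ((1:ℝ)/3) < p := by
      apply hWbig p hpp (r2 p hpp hpr)
      · rintro rfl
        exact hpp.one_lt.ne' (Nat.Coprime.eq_one_of_dvd (Nat.Coprime.coprime_dvd_left hpr r3) (Dvd.intro _ rfl))
      · intro hpW
        exact hpp.one_lt.ne' (Nat.Coprime.eq_one_of_dvd (Nat.Coprime.coprime_dvd_left hpr r3)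
          (hpW.trans (Dvd.intro_left _ rfl)))
    have h2 := Int.le_of_dvd (hab j).1 hd
    have h3 : (p:ℝ) ≤ a j := by exact_mod_cast h2
    have h4 := (hab j).2.1
    linarith
  have hRA : ∀ r ∈ R, Nat.Coprime A r := by
    intro r hr
    rw [Nat.coprime_iff_gcd_eq_one]
    by_contra h
    obtain ⟨p, hp, hd⟩ := Nat.exists_prime_and_dvd h
    have hr' := hr
    rw [hR, Finset.mem_filter] at hr'
    apply hRp r hr p (Nat.mem_primeFactors.2 ⟨hp, hd.trans (Nat.gcd_dvd_right _ _), hr'.2.1.ne_zero⟩) i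
    exact dvd_trans (by exact_mod_cast hd.trans (Nat.gcd_dvd_left _ _)) hAdvd
  have hRW : ∀ r ∈ R, Nat.Coprime W r := by
    intro r hr
    rw [hR, Finset.mem_filter] at hr
    exact (Nat.Coprime.coprime_mul_left_right hr.2.2.2).symm
  have hRp0 : ∀ r ∈ R, Nat.Coprime r p0 := by
    intro r hr
    rw [hR, Finset.mem_filter] at hr
    exact Nat.Coprime.coprime_mul_right_right hr.2.2.2
  have hm1' : (1:ℝ) ≤ m := by exact_mod_cast hm0
  have hmX : (m:ℝ) ≤ X ^ ((1:ℝ)/10) := le_trans (by exact_mod_cast hmM) (Nat.floor_le (by positivity))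
  have hXm : X ^ ((9:ℝ)/10) ≤ X / m := by
    rw [le_div_iff₀ (by linarith)]
    calc _ ≤ X ^ ((9:ℝ)/10) * X ^ ((1:ℝ)/10) := by gcongr
      _ = X := by rw [← Real.rpow_add hX0]; norm_num
  set x := 3 * L ^ ((1:ℝ)/3) * X / m with hx
  have hxX : 3 * (X / m) ≤ x := by
    have : x = 3 * L ^ ((1:ℝ)/3) * (X / m) := by rw [hx]; ring
    rw [this]
    have : 0 < X / m := by positivity
    nlinarith
  have hX910 : 1 < X ^ ((9:ℝ)/10) := Real.one_lt_rpow hX (by norm_num)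
  have hx9 : X ^ ((9:ℝ)/10) ≤ x := by linarith
  have hx2 : 2 ≤ x := by linarith
  have hqlt : ∀ r ∈ R, ((4 * (A * (W * r)) : ℕ) : ℝ) < x ^ ((2:ℝ)/5) := by
    intro r hr
    rw [hR, Finset.mem_filter, Finset.mem_Ioc] at hr
    have hrN : (r:ℝ) ≤ X ^ ((1:ℝ)/5) := le_trans (by exact_mod_cast hr.1.2) (Nat.floor_le (by positivity))
    calc ((4 * (A * (W * r)) : ℕ) : ℝ) = 4 * (A:ℝ) * W * r := by push_cast; ring
      _ ≤ 4 * L ^ ((1:ℝ)/3) * (4:ℝ) ^ (2 * L ^ ((1:ℝ)/3)) * X ^ ((1:ℝ)/5) := by gcongr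
      _ < _ := hsize
      _ ≤ _ := Real.rpow_le_rpow (by positivity) hx9 (by norm_num)
  have hqx : ∀ r ∈ R, ((4 * (A * (W * r)) : ℕ) : ℝ) ≤ x := by
    intro r hr
    refine (hqlt r hr).le.trans ?_
    calc x ^ ((2:ℝ)/5) ≤ x ^ (1:ℝ) := Real.rpow_le_rpow_of_exponent_le (by linarith) (by norm_num)
      _ = x := Real.rpow_one x
  have hS : ∑ r ∈ R, Eerr x (4 * (A * (W * r))) ≤ x * Real.exp (-c0 * Real.sqrt (Real.log x)) := by
    refine le_trans ?_ (hlev x hx2 (div_le_self (by positivity) hm1'))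
    rw [← Finset.sum_image (f := fun q => Eerr x q) (g := fun r => 4 * (A * (W * r)))]
    · apply Finset.sum_le_sum_of_subset_of_nonneg
      · intro q hq
        obtain ⟨r, hr, rfl⟩ := Finset.mem_image.1 hq
        rw [Finset.mem_filter, Finset.mem_range]
        refine ⟨?_, hqlt r hr, ?_⟩
        · apply Nat.lt_succ_of_le
          exact_mod_cast (hqx r hr).trans (Nat.le_ceil x)
        · exact Nat.Coprime.mul_left hp0odd (Nat.Coprime.mul_left hAp0.symm
            (Nat.Coprime.mul_left hWp0 (hRp0 r hr)))
      · intros; exact Eerr_nonneg _ _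
    · intro r _ r' _ h
      have h1 := Nat.eq_of_mul_eq_mul_left (by norm_num) h
      exact Nat.eq_of_mul_eq_mul_left hW0 (Nat.eq_of_mul_eq_mul_left hA h1)
  have hcore := core_m X x A W k N B v0 m (fun t => ∏ i, (a i * t + b i)) D R lam (L ^ ((k:ℝ)/2))
    (x * Real.exp (-c0 * Real.sqrt (Real.log x))) (Real.exp (c0/2 * Real.sqrt L)) ν hX0 (CP_prod a b) hm0 hA hB0
    hW0 hm1 hmA hW3 hAodd hBA hv ?_ hlamD hlam hDR ?_ ?_ ?_ ?_ ?_ (by linarith) ?_ hqx (Real.exp_pos _) hS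
  rotate_left
  · intro n hn
    rw [Finset.prod_ne_zero_iff]
    intro j _
    have hn0 : (0:ℤ) < n := by
      have : (0:ℝ) < n := by linarith
      exact_mod_cast this
    have h1 := (hab j).1
    have h2 := (hab j).2.2.2.1
    positivity
  · intro d hd
    rw [hD, Finset.mem_filter] at hd
    exact hd.2.1.ne_zero
  · intro r hr
    rw [hR, Finset.mem_filter, Finset.mem_Ioc] at hr
    exact ⟨hr.1.1, hr.1.2, hr.2.1⟩
  · intro r hr
    rw [hR, Finset.mem_filter] at hr
    exact hr.2.2.1
  · intro r hr
    exact (hRA r hr).mul_left (hRW r hr)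
  · intro r hr p hp
    have hpp := Nat.prime_of_mem_primeFactors hp
    have h1 : ¬ (p:ℤ) ∣ (A:ℤ) := fun h => hRp r hr p hp i (h.trans hAdvd)
    rw [hν p hpp]
    exact ⟨TS_prime _ A B p hpp h1 hdvdF, nu_le k a b p hpp (hRp r hr p hp)⟩
  · apply div_le_div_of_nonneg_right _ (by positivity)
    nlinarith
  have hQD : ∑ d ∈ D, ∑ e ∈ D, lam d * lam e * ∏ p ∈ (d * e).primeFactors, ((ν p : ℝ) - 1) / ((p:ℝ) - 1) = Q := by
    rw [hQ]
    exact sum_restrict D (Finset.range (M + 1)) lam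
      (fun d e => ∏ p ∈ (d * e).primeFactors, ((ν p : ℝ) - 1) / ((p:ℝ) - 1)) (Finset.filter_subset _ _) hlamD
  rw [hQD] at hcore
  refine le_trans ?_ hcore
  have hNX : (N:ℝ) ≤ X := by
    refine (Nat.floor_le (by positivity)).trans ?_
    calc X ^ ((1:ℝ)/5) ≤ X ^ (1:ℝ) := Real.rpow_le_rpow_of_exponent_le hX.le (by norm_num)
      _ = X := Real.rpow_one X
  have herr := err_m c0 X m k N hc0 hX hL (by linarith) hmX hNX
  have hcard := card_pI_ge' c Z0 hc hch X A B m hX hA1 hB0' hBX hm1' (hZ0.trans hXm) (by linarith)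
    (by linarith)
  change _ ≤ ((pI ((A * X + B) / m) ((A * (2 * X) + B) / m)).card : ℝ) at hcard
  have h5 : c * A * X / (2 * L) / (2 * (A * W).totient) * Q * (1 / m) ≤
      ((pI ((A * X + B) / m) ((A * (2 * X) + B) / m)).card : ℝ) / (2 * (A * W).totient) * Q := by
    have h6 := div_le_div_of_nonneg_right hcard (by positivity : (0:ℝ) ≤ 2 * (A * W).totient)
    have h7 := mul_le_mul_of_nonneg_right h6 hQ0
    refine le_trans (le_of_eq ?_) h7
    ring
  linarith

lemma InP1_g (k p0 : ℕ) (a b : Fin k → ℤ) (i : Fin k) (g A : ℕ) (B : ℤ)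
    (hadm : ∀ p : ℕ, p.Prime → p % 4 = 3 → ∃ n : ℤ, Int.gcd (∏ i, (a i * n + b i)) (p : ℤ) = 1)
    (hap0 : Int.gcd (2 * (p0 : ℤ)) (a i) = 1)
    (hgA : a i = g * A) (hgB : b i = g * B) : InP1 g := by
  intro q hq hqg
  have hqg' : (q:ℤ) ∣ g := by exact_mod_cast hqg
  have hodd : q ≠ 2 := by
    rintro rfl
    have h1 : (2:ℤ) ∣ a i := by rw [hgA]; exact Dvd.dvd.mul_right (by exact_mod_cast hqg) _
    have h2 := Int.dvd_coe_gcd (Dvd.intro (p0:ℤ) rfl : (2:ℤ) ∣ 2 * (p0:ℤ)) h1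
    rw [hap0] at h2
    norm_num at h2
  have h3 : q % 4 ≠ 3 := by
    intro h
    obtain ⟨n, hn⟩ := hadm q hq h
    have h1 : (q:ℤ) ∣ ∏ i, (a i * n + b i) := by
      refine Dvd.dvd.trans ?_ (Finset.dvd_prod_of_mem (fun i => a i * n + b i) (Finset.mem_univ i))
      refine hqg'.trans ⟨A * n + B, ?_⟩
      rw [hgA, hgB]; ring
    have h2 := Int.dvd_coe_gcd h1 (dvd_refl (q:ℤ))
    rw [hn] at h2
    have h3 : q ∣ 1 := by exact_mod_cast h2
    exact hq.one_lt.ne' (Nat.dvd_one.1 h3)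
  have := hq.eq_two_or_odd
  omega

lemma SP1c_le_Hn (N A : ℕ) : SP1c N A ≤ Hn N := by
  classical
  unfold SP1c Hn
  apply Finset.sum_le_sum_of_subset_of_nonneg (Finset.filter_subset _ _)
  intros; positivity

lemma main_num (c A X L φW φAW S1 Sc Q : ℝ) (hc : 0 < c) (hX : 0 < X) (hL : 0 < L)
    (hW : 0 < φW) (hAW : 0 < φAW) (hQ : 0 ≤ Q) (h1 : φAW * S1 ≤ A * φW * Sc) (h2 : Real.sqrt L / 12 ≤ S1) :
    c / 48 * (X / (φW * L ^ ((1:ℝ)/2))) * Q ≤ c * A * X / (2 * L) / (2 * φAW) * Q * Sc := by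
  rw [← Real.sqrt_eq_rpow]
  have hs : 0 < Real.sqrt L := Real.sqrt_pos.2 hL
  have hss : Real.sqrt L * Real.sqrt L = L := Real.mul_self_sqrt hL.le
  have h3 : φAW * (Real.sqrt L / 12) ≤ A * φW * Sc := (mul_le_mul_of_nonneg_left h2 hAW.le).trans h1
  have e1 : c / 48 * (X / (φW * Real.sqrt L)) * Q =
      (c * X * Q / (4 * L * φAW * φW)) * (φAW * (Real.sqrt L / 12)) := by
    rw [show 4 * L * φAW * φW = 4 * (Real.sqrt L * Real.sqrt L) * φAW * φW by rw [hss]]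
    field_simp; ring
  have e2 : c * A * X / (2 * L) / (2 * φAW) * Q * Sc =
      (c * X * Q / (4 * L * φAW * φW)) * (A * φW * Sc) := by
    field_simp; ring
  rw [e1, e2]
  exact mul_le_mul_of_nonneg_left h3 (by positivity)

theorem sieve_weighted_count_of_sums_of_two_squares :
    ∀ c0 : ℝ, 0 < c0 → ∃ c1 : ℝ, 0 < c1 ∧ ∃ c : ℝ, 0 < c ∧ ∃ C : ℝ, 0 < C ∧
    ∃ X0 : ℝ, ∀ X : ℝ, X0 ≤ X →
    ∀ (k p0 W : ℕ) (a b : Fin k → ℤ) (ν : ℕ → ℕ) (v0 : ℤ) (lam : ℕ → ℝ) (w : ℤ → ℝ),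
    -- sieve setup
    0 < k → (k : ℝ) ≤ Real.log X ^ ((1 : ℝ) / 5) →
    p0.Prime → Real.log (Real.log X) / 2 ≤ (p0 : ℝ) → (p0 : ℝ) ≤ X →
    W = ∏ p ∈ (Finset.range (⌊2 * Real.log X ^ ((1 : ℝ) / 3)⌋₊ + 1)).filter
          (fun p : ℕ => p.Prime ∧ (p : ℝ) ≤ 2 * Real.log X ^ ((1 : ℝ) / 3) ∧ p % 4 = 3 ∧ p ≠ p0), p →
    Function.Injective (fun i => (a i, b i)) →
    (∀ p : ℕ, p.Prime → p % 4 = 3 → ∃ n : ℤ, Int.gcd (∏ i, (a i * n + b i)) (p : ℤ) = 1) →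
    (∀ i, 0 < a i ∧ (a i : ℝ) ≤ Real.log X ^ ((1 : ℝ) / 3) ∧
      Int.gcd (2 * (p0 : ℤ)) (a i) = 1 ∧ 0 < b i ∧ (b i : ℝ) < X) →
    (∀ p : ℕ, p.Prime →
      ν p = ({n : ℕ | n < p ∧ (p : ℤ) ∣ ∏ i, (a i * (n : ℤ) + b i)}).ncard) →
    Int.gcd (∏ i, (a i * v0 + b i)) (W : ℤ) = 1 →
    (∀ d : ℕ, ¬(Squarefree d ∧ (d : ℝ) < X ^ ((1 : ℝ) / 10) ∧ InP3 d ∧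
      Nat.Coprime d (p0 * W)) → lam d = 0) →
    (∀ d : ℕ, |lam d| ≤ Real.log X ^ ((k : ℝ) / 2)) →
    (∀ n : ℤ, w n = if n % (W : ℤ) = v0 % (W : ℤ) then
        (∑ d ∈ (∏ i, (a i * n + b i)).natAbs.divisors, lam d) ^ 2 else 0) →
    -- level-of-distribution hypothesis for p0
    (∀ x : ℝ, 2 ≤ x → x ≤ 3 * Real.log X ^ ((1 : ℝ) / 3) * X →
      ∑ q ∈ (Finset.range (⌈x⌉₊ + 1)).filter
          (fun q : ℕ => (q : ℝ) < x ^ ((2 : ℝ) / 5) ∧ Nat.gcd q p0 = 1),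
        Eerr x q ≤ x * Real.exp (-c0 * Real.sqrt (Real.log x))) →
    -- conclusion
    c1 * (X * (k : ℝ) / ((Nat.totient W : ℝ) * Real.log X ^ ((1 : ℝ) / 2))) *
        (∑ d ∈ Finset.range (⌊X ^ ((1 : ℝ) / 10)⌋₊ + 1),
          ∑ e ∈ Finset.range (⌊X ^ ((1 : ℝ) / 10)⌋₊ + 1),
            lam d * lam e * ∏ p ∈ (d * e).primeFactors, ((ν p : ℝ) - 1) / ((p : ℝ) - 1)) -
      C * X * Real.exp (-c * Real.sqrt (Real.log X)) ≤
    ∑ n ∈ (Finset.Icc (⌊X⌋ + 1) ⌊2 * X⌋).filter (fun n => n % (W : ℤ) = v0 % (W : ℤ)),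
      (Nat.card {i : Fin k // IsSumTwoSquaresZ (a i * n + b i)} : ℝ) * w n := by
  classical
  intro c0 hc0
  obtain ⟨c, Z0, hc, hZ01, hch⟩ := chA_count
  obtain ⟨X0, hX0⟩ := ev_all c0 Z0 hc0
  refine ⟨c / 48, by positivity, c0 / 4, by positivity, 1, one_pos, X0, ?_⟩
  intro X hXX k p0 W a b ν v0 lam w hk hkL hp0 hp0l hp0X hW hinj hadm hab hν hv0 hlam0 hlam hw hlev
  obtain ⟨hX, hL, h37, hsize, hZ0, h3L, hll⟩ := hX0 X hXX
  have hXpos : 0 < X := by linarith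
  have hLpos : 0 < Real.log X := by linarith
  obtain ⟨hW0, hW3, hWp0, hW4, hWbig⟩ := W_facts _ (by positivity) p0 W hp0 hW
  have hφW : (0:ℝ) < W.totient := by exact_mod_cast Nat.totient_pos.2 hW0
  have hwn : ∀ n, 0 ≤ w n := by
    intro n; rw [hw n]; split_ifs
    · positivity
    · exact le_rfl
  set Q := (∑ d ∈ Finset.range (⌊X ^ ((1 : ℝ) / 10)⌋₊ + 1),
          ∑ e ∈ Finset.range (⌊X ^ ((1 : ℝ) / 10)⌋₊ + 1),
            lam d * lam e * ∏ p ∈ (d * e).primeFactors, ((ν p : ℝ) - 1) / ((p : ℝ) - 1)) with hQ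
  clear_value Q
  by_cases hQ0 : Q < 0
  · have h1 : 0 ≤ ∑ n ∈ (Finset.Icc (⌊X⌋ + 1) ⌊2 * X⌋).filter (fun n => n % (W : ℤ) = v0 % (W : ℤ)),
      (Nat.card {i : Fin k // IsSumTwoSquaresZ (a i * n + b i)} : ℝ) * w n :=
      Finset.sum_nonneg (fun n _ => mul_nonneg (Nat.cast_nonneg _) (hwn n))
    have h2 : c / 48 * (X * (k : ℝ) / ((Nat.totient W : ℝ) * Real.log X ^ ((1 : ℝ) / 2))) * Q ≤ 0 :=
      mul_nonpos_of_nonneg_of_nonpos (by positivity) hQ0.le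
    have h3 : 0 ≤ 1 * X * Real.exp (-(c0 / 4) * Real.sqrt (Real.log X)) := by positivity
    linarith
  push Not at hQ0
  set K := 2 * Real.log X ^ k * (3 * Real.log X ^ ((1:ℝ)/3) *
      (Real.exp (c0/2 * Real.sqrt (Real.log X)) * Real.exp (-c0 * (9/10 * Real.sqrt (Real.log X))) +
      2 / Real.exp (c0/2 * Real.sqrt (Real.log X)) * (1 + Real.log X) ^ (2 * (4 * k) ^ 2))) with hK
  have hK0 : 0 ≤ K := by positivity
  clear_value K
  have hi : ∀ i : Fin k, c / 48 * (X / ((W.totient : ℝ) * Real.log X ^ ((1:ℝ)/2))) * Q -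
      X * ((1 + Real.log X) * K) ≤
      ∑ n ∈ (Finset.Icc (⌊X⌋ + 1) ⌊2 * X⌋).filter (fun n => n % (W : ℤ) = v0 % (W : ℤ)),
      (if IsSumTwoSquaresZ (a i * n + b i) then w n else 0) := by
    intro i
    obtain ⟨ha0, haL, hap0, hb0, hbX⟩ := hab i
    obtain ⟨g, A, B, hg, hA, hB0, hgA, hgB, hBA⟩ := gcd_decomp (a i) (b i) ha0 hb0
    have hg1 := InP1_g k p0 a b i g A B hadm hap0 hgA hgB
    have hMX : (⌊X ^ ((1:ℝ)/10)⌋₊ : ℝ) ≤ X ^ ((1:ℝ)/10) := Nat.floor_le (by positivity)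
    have hMM : (⌊X ^ ((1:ℝ)/10)⌋₊ : ℝ) * ⌊X ^ ((1:ℝ)/10)⌋₊ ≤ X := by
      calc _ ≤ X ^ ((1:ℝ)/10) * X ^ ((1:ℝ)/10) := by gcongr
        _ = X ^ ((1:ℝ)/5) := by rw [← Real.rpow_add hXpos]; norm_num
        _ ≤ X ^ (1:ℝ) := Real.rpow_le_rpow_of_exponent_le hX.le (by norm_num)
        _ = X := Real.rpow_one X
    have hMX1 : (⌊X ^ ((1:ℝ)/10)⌋₊ : ℝ) ≤ X := by
      refine hMX.trans ?_
      calc _ ≤ X ^ (1:ℝ) := Real.rpow_le_rpow_of_exponent_le hX.le (by norm_num)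
        _ = X := Real.rpow_one X
    refine le_trans ?_ (sum_NS_le X A W g ⌊X ^ ((1:ℝ)/10)⌋₊ (a i) (b i) B v0 w hXpos hA hB0 hg hg1 hgA hgB
      hMM hwn)
    have hφAW : (0:ℝ) < (A * W).totient := by exact_mod_cast Nat.totient_pos.2 (Nat.mul_pos hA hW0)
    have hmain := main_num c A X (Real.log X) W.totient (A * W).totient (SP1 ⌊X ^ ((1:ℝ)/10)⌋₊)
      (SP1c ⌊X ^ ((1:ℝ)/10)⌋₊ A) Q hc hXpos hLpos hφW hφAW hQ0
      (SP1c_bound _ A W hA.ne' hW0.ne' hW3) (SP1_ge X hX)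
    have hSc : SP1c ⌊X ^ ((1:ℝ)/10)⌋₊ A ≤ 1 + Real.log X :=
      (SP1c_le_Hn _ _).trans (Hn_le _ X hX.le hMX1)
    have herr : X * K * SP1c ⌊X ^ ((1:ℝ)/10)⌋₊ A ≤ X * K * (1 + Real.log X) :=
      mul_le_mul_of_nonneg_left hSc (by positivity)
    have hsum : c * A * X / (2 * Real.log X) / (2 * (A * W).totient) * Q * SP1c ⌊X ^ ((1:ℝ)/10)⌋₊ A -
        X * K * SP1c ⌊X ^ ((1:ℝ)/10)⌋₊ A ≤
        ∑ m ∈ (Finset.Ioc 0 ⌊X ^ ((1:ℝ)/10)⌋₊).filter (fun m => InP1 m ∧ Nat.Coprime m A),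
          ∑ n ∈ NS X A W B v0 m, w n := by
      unfold SP1c
      rw [Finset.mul_sum, Finset.mul_sum, ← Finset.sum_sub_distrib]
      apply Finset.sum_le_sum
      intro m hm
      rw [Finset.mem_filter, Finset.mem_Ioc] at hm
      rw [hK]
      refine (core_i c0 c Z0 hc0 hc hch X hX hL hsize hZ0 h3L hll k p0 W a b ν v0 lam hp0 hp0l hW hadm hab
        hν hv0 hlam0 hlam hlev i Q hQ hQ0 A g B hg hA hB0 hgA hgB hBA m hm.1.1 hm.1.2 hm.2.1 hm.2.2).trans ?_
      apply le_of_eq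
      apply Finset.sum_congr rfl
      intro n hn
      rw [hw n, if_pos ((mem_NS X A W B v0 m n).1 hn).2.1]
    linarith
  have hswap : ∑ n ∈ (Finset.Icc (⌊X⌋ + 1) ⌊2 * X⌋).filter (fun n => n % (W : ℤ) = v0 % (W : ℤ)),
      (Nat.card {i : Fin k // IsSumTwoSquaresZ (a i * n + b i)} : ℝ) * w n =
      ∑ i : Fin k, ∑ n ∈ (Finset.Icc (⌊X⌋ + 1) ⌊2 * X⌋).filter (fun n => n % (W : ℤ) = v0 % (W : ℤ)),
      (if IsSumTwoSquaresZ (a i * n + b i) then w n else 0) := by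
    rw [Finset.sum_comm]
    apply Finset.sum_congr rfl
    intro n _
    rw [← Finset.sum_filter, Finset.sum_const, nsmul_eq_mul, Nat.card_eq_fintype_card, Fintype.card_subtype]
  rw [hswap]
  have htot := Finset.sum_le_sum (fun i (_ : i ∈ (Finset.univ : Finset (Fin k))) => hi i)
  refine le_trans ?_ htot
  rw [Finset.sum_const, Finset.card_univ, Fintype.card_fin, nsmul_eq_mul]
  have hen := err_num c0 (Real.log X) k hc0 hL hk hkL h37
  rw [← hK] at hen
  have h9 := mul_le_mul_of_nonneg_left hen hXpos.le
  have e : (k:ℝ) * (c / 48 * (X / ((W.totient : ℝ) * Real.log X ^ ((1:ℝ)/2))) * Q) =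
      c / 48 * (X * (k : ℝ) / ((Nat.totient W : ℝ) * Real.log X ^ ((1 : ℝ) / 2))) * Q := by ring
  rw [mul_sub, e]
  linarith
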